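/- Let k ≥ 4 be an integer and let G be a 3-connected k-regular graph. Suppose u and v are non-adjacent vertices and v has two non-adjacent neighbours w1, w2, neither of which is adjacent to u. Then the set of proper k-colourings of G forms a single Kempe class. -/

import Mathlib

open SimpleGraph
open scoped Classical

variable {V : Type*}

/-- A proper `k`-colouring of `G`. -/
def IsProperColoring (G : SimpleGraph V) (k : ℕ) (c : V → Fin k) : Prop :=
  ∀ ⦃u v : V⦄, G.Adj u v → c u ≠ c v

/-- `c'` is obtained from `c` by a single Kempe change: the colours `a` and `b` are
swapped on the connected component (of the subgraph induced by the vertices coloured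
`a` or `b`) containing `v0`, and all other vertices keep their colour. -/

def KempeStep (G : SimpleGraph V) (k : ℕ) (c c' : V → Fin k) : Prop :=
  ∃ a b : Fin k, ∃ v0 : {x : V | c x = a ∨ c x = b},
    ∀ v : V, c' v =
      if h : c v = a ∨ c v = b then
        if (G.induce {x : V | c x = a ∨ c x = b}).Reachable v0 ⟨v, h⟩
          then Equiv.swap a b (c v) else c v
      else c v

/-- Two colourings are Kempe equivalent if one is obtained from the other by a finite
sequence of Kempe changes. -/
def KempeEquiv (G : SimpleGraph V) (k : ℕ) (c c' : V → Fin k) : Prop :=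
  Relation.ReflTransGen (KempeStep G k) c c'

/-- The set of all proper `k`-colourings of `G` forms a single Kempe class. -/
def KempeClass (G : SimpleGraph V) (k : ℕ) : Prop :=
  ∀ c c' : V → Fin k, IsProperColoring G k c → IsProperColoring G k c' →
    KempeEquiv G k c c'

/-- `G` is `d`-degenerate: every nonempty set of vertices contains a vertex with at
most `d` neighbours inside the set. -/
def Degenerate (G : SimpleGraph V) (d : ℕ) : Prop :=
  ∀ S : Set V, S.Nonempty → ∃ v ∈ S, (S ∩ G.neighborSet v).ncard ≤ d

/-- `G` is 3-connected: more than 3 vertices, and deleting any at most 2 vertices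
leaves it connected. -/
def ThreeConnected [Fintype V] (G : SimpleGraph V) : Prop :=
  3 < Fintype.card V ∧ ∀ S : Set V, S.ncard ≤ 2 → (G.induce Sᶜ).Connected

namespace Kmp


/-- neighbours of a vertex, as a finset -/
noncomputable def nb [Fintype V] (G : SimpleGraph V) (v : V) : Finset V :=
  Finset.univ.filter (fun w => G.Adj v w)

theorem mem_nb [Fintype V] {G : SimpleGraph V} {v w : V} : w ∈ nb G v ↔ G.Adj v w := by
  simp [nb]

/-- two proper colourings that differ by exchanging two colours on a set of vertices -/
def Step (G : SimpleGraph V) (k : ℕ) (c c' : V → Fin k) : Prop :=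
  IsProperColoring G k c ∧ IsProperColoring G k c' ∧ ∃ a b : Fin k,
    ∀ v, c v = c' v ∨ (c v = a ∧ c' v = b) ∨ (c v = b ∧ c' v = a)

theorem Step.symm {G : SimpleGraph V} {k : ℕ} {c c' : V → Fin k} (h : Step G k c c') :
    Step G k c' c := by
  obtain ⟨h1, h2, a, b, h⟩ := h
  refine ⟨h2, h1, a, b, fun v => ?_⟩
  rcases h v with h | h | h
  · exact Or.inl h.symm
  · exact Or.inr (Or.inr ⟨h.2, h.1⟩)
  · exact Or.inr (Or.inl ⟨h.2, h.1⟩)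

theorem Step.kempe [Fintype V] {G : SimpleGraph V} {k : ℕ} {c' : V → Fin k} :
    ∀ (n : ℕ) (c : V → Fin k), (Finset.univ.filter (fun v => c v ≠ c' v)).card = n →
      Step G k c c' → KempeEquiv G k c c' := by
  intro n
  induction n using Nat.strong_induction_on with
  | _ n ih =>
  intro c hn hs
  obtain ⟨h1, h2, a, b, h⟩ := hs
  by_cases hz : ∃ v0, c v0 ≠ c' v0
  · obtain ⟨v0, hv0⟩ := hz
    have hab : ∀ v, c v ≠ c' v → (c v = a ∨ c v = b) ∧ c' v = Equiv.swap a b (c v) := by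
      intro v hv
      rcases h v with h | h | h
      · exact absurd h hv
      · simp [h.1, h.2]
      · simp [h.1, h.2]
    have hv0' := (hab v0 hv0).1
    let H := G.induce {x : V | c x = a ∨ c x = b}
    let s0 : {x : V | c x = a ∨ c x = b} := ⟨v0, hv0'⟩
    have hcl : ∀ z : {x : V | c x = a ∨ c x = b}, H.Reachable s0 z → c z ≠ c' z := by
      intro z hz
      obtain ⟨p⟩ := hz
      have : ∀ (s t : {x : V | c x = a ∨ c x = b}) (p : H.Walk s t), c s ≠ c' s → c t ≠ c' t := by
        intro s t p
        induction p with
        | nil => exact id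
        | @cons s t r hst p ihp =>
          intro hs
          apply ihp
          intro ht
          have hst' : G.Adj s t := hst
          have e1 := h1 hst'
          have e2 := h2 hst'
          have e3 := hab _ hs
          have e4 : c t = a ∨ c t = b := t.2
          rcases e3.1 with e5 | e5 <;> rcases e4 with e6 | e6
          · exact e1 (e5.trans e6.symm)
          · apply e2; rw [e3.2, ← ht, e5, e6]; simp
          · apply e2; rw [e3.2, ← ht, e5, e6]; simp
          · exact e1 (e5.trans e6.symm)
      exact this _ _ p hv0
    let c2 : V → Fin k := fun v => if hh : c v = a ∨ c v = b then
        if H.Reachable s0 ⟨v, hh⟩ then Equiv.swap a b (c v) else c v else c v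
    have hstep : KempeStep G k c c2 := by
      refine ⟨a, b, s0, fun v => ?_⟩
      simp only [c2, H]
      by_cases hh : c v = a ∨ c v = b
      · rw [dif_pos hh, dif_pos hh]
        by_cases hr : (G.induce {x : V | c x = a ∨ c x = b}).Reachable s0 ⟨v, hh⟩
        · rw [if_pos hr, if_pos hr]
        · rw [if_neg hr, if_neg hr]
      · rw [dif_neg hh, dif_neg hh]
    have hc2 : ∀ v, (c2 v = c' v ∧ c v ≠ c' v ∧ ∃ hh : c v = a ∨ c v = b, H.Reachable s0 ⟨v, hh⟩) ∨
        (c2 v = c v ∧ ∀ hh : c v = a ∨ c v = b, ¬ H.Reachable s0 ⟨v, hh⟩) := by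
      intro v
      by_cases hh : c v = a ∨ c v = b
      · by_cases hr : H.Reachable s0 ⟨v, hh⟩
        · left
          have := hcl _ hr
          refine ⟨?_, this, hh, hr⟩
          rw [(hab v this).2]
          simp only [c2, dif_pos hh, if_pos hr]
        · right
          refine ⟨?_, fun _ => hr⟩
          simp only [c2, dif_pos hh, if_neg hr]
      · right
        refine ⟨?_, fun h' => absurd h' hh⟩
        simp only [c2, dif_neg hh]
    have hkey : ∀ s t, G.Adj s t → (∃ hh : c s = a ∨ c s = b, H.Reachable s0 ⟨s, hh⟩) →
        (∀ hh : c t = a ∨ c t = b, ¬ H.Reachable s0 ⟨t, hh⟩) → c s ≠ c' s → c' s ≠ c t := by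
      intro s t hst ⟨hh, hr⟩ hnr hne he
      have : c t = a ∨ c t = b := by
        rw [← he, (hab s hne).2]
        rcases hh with hh | hh <;> simp [hh]
      apply hnr this
      refine hr.trans (SimpleGraph.Adj.reachable ?_)
      exact hst
    have hp2 : IsProperColoring G k c2 := by
      intro s t hst
      rcases hc2 s with ⟨e1, e2, e3⟩ | ⟨e1, e2⟩ <;> rcases hc2 t with ⟨f1, f2, f3⟩ | ⟨f1, f2⟩
      · rw [e1, f1]; exact h2 hst
      · rw [e1, f1]; exact hkey s t hst e3 f2 e2
      · rw [e1, f1]; exact (hkey t s hst.symm f3 e2 f2).symm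
      · rw [e1, f1]; exact h1 hst
    have hs2 : Step G k c2 c' := by
      refine ⟨hp2, h2, a, b, fun v => ?_⟩
      rcases hc2 v with ⟨e1, -⟩ | ⟨e1, -⟩
      · exact Or.inl e1
      · rw [e1]; exact h v
    refine Relation.ReflTransGen.head hstep (ih _ ?_ c2 rfl hs2)
    rw [← hn]
    apply Finset.card_lt_card
    rw [Finset.ssubset_iff_of_subset]
    · refine ⟨v0, by simpa using hv0, ?_⟩
      simp only [Finset.mem_filter, Finset.mem_univ, true_and, not_not]
      rcases hc2 v0 with ⟨e1, -⟩ | ⟨-, e2⟩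
      · exact e1
      · exact absurd (SimpleGraph.Reachable.refl _) (e2 hv0')
    · intro v
      simp only [Finset.mem_filter, Finset.mem_univ, true_and]
      intro hv
      rcases hc2 v with ⟨e1, e2, -⟩ | ⟨e1, -⟩
      · exact e2
      · rwa [e1] at hv
  · have : c = c' := by
      funext v; by_contra hv; exact hz ⟨v, hv⟩
    rw [this]
    exact Relation.ReflTransGen.refl

/-- Kempe equivalence through set-wise swaps -/
def KE (G : SimpleGraph V) (k : ℕ) (c c' : V → Fin k) : Prop :=
  Relation.ReflTransGen (Step G k) c c'

theorem KE.symm {G : SimpleGraph V} {k : ℕ} {c c' : V → Fin k} (h : KE G k c c') : KE G k c' c := by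
  induction h with
  | refl => exact Relation.ReflTransGen.refl
  | tail _ h ih => exact Relation.ReflTransGen.head h.symm ih

theorem KE.trans {G : SimpleGraph V} {k : ℕ} {c c' d : V → Fin k} (h : KE G k c c')
    (h' : KE G k c' d) : KE G k c d :=
  Relation.ReflTransGen.trans h h'

theorem KE.kempe [Fintype V] {G : SimpleGraph V} {k : ℕ} {c c' : V → Fin k} (h : KE G k c c') :
    KempeEquiv G k c c' := by
  induction h with
  | refl => exact Relation.ReflTransGen.refl
  | tail _ h ih => exact Relation.ReflTransGen.trans ih (Step.kempe _ _ rfl h)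

/-- proper on a set of vertices -/
def PropOn (G : SimpleGraph V) (k : ℕ) (S : Finset V) (c : V → Fin k) : Prop :=
  ∀ u ∈ S, ∀ v ∈ S, G.Adj u v → c u ≠ c v

def StepOn (G : SimpleGraph V) (k : ℕ) (S : Finset V) (c c' : V → Fin k) : Prop :=
  PropOn G k S c ∧ PropOn G k S c' ∧ ∃ a b : Fin k,
    ∀ v ∈ S, c v = c' v ∨ (c v = a ∧ c' v = b) ∨ (c v = b ∧ c' v = a)

/-- lifting one step over a new vertex whose colour is not involved -/
theorem lift_out {G : SimpleGraph V} {k : ℕ} {S : Finset V} {z : V}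
    {d d' t : V → Fin k} {a b : Fin k}
    (hz : z ∈ S) (ht : PropOn G k S t) (htd : ∀ v ∈ S.erase z, t v = d v)
    (hd' : PropOn G k (S.erase z) d')
    (hab : ∀ v ∈ S.erase z, d v = d' v ∨ (d v = a ∧ d' v = b) ∨ (d v = b ∧ d' v = a))
    (x : Fin k) (hx : t z = x ∨ (t z = a ∧ x = b) ∨ (t z = b ∧ x = a))
    (hxn : ∀ v ∈ S, G.Adj z v → d' v ≠ x) :
    ∃ t', StepOn G k S t t' ∧ ∀ v ∈ S.erase z, t' v = d' v := by
  have hagree : ∀ v, v ≠ z → Function.update d' z x v = d' v := fun v hv => by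
    simp [Function.update_of_ne hv]
  refine ⟨Function.update d' z x, ⟨ht, ?_, a, b, ?_⟩, ?_⟩
  · intro u hu v hv huv
    by_cases h1 : u = z
    · subst h1
      have h2 : v ≠ u := fun h => G.loopless.irrefl _ (h ▸ huv)
      rw [hagree v h2, Function.update_self]
      exact (hxn v hv huv).symm
    · by_cases h2 : v = z
      · subst h2
        rw [hagree u h1, Function.update_self]
        exact hxn u hu huv.symm
      · rw [hagree u h1, hagree v h2]
        exact hd' u (Finset.mem_erase.2 ⟨h1, hu⟩) v (Finset.mem_erase.2 ⟨h2, hv⟩) huv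
  · intro v hv
    by_cases h1 : v = z
    · subst h1
      rw [Function.update_self]; exact hx
    · rw [hagree v h1, htd v (Finset.mem_erase.2 ⟨h1, hv⟩)]
      exact hab v (Finset.mem_erase.2 ⟨h1, hv⟩)
  · intro v hv
    exact hagree v (Finset.mem_erase.1 hv).1

theorem lift_step [Fintype V] {G : SimpleGraph V} {k : ℕ} {S : Finset V} {z : V}
    (hz : z ∈ S) (hdeg : (nb G z ∩ S).card < k)
    {d d' t : V → Fin k} (ht : PropOn G k S t) (htd : ∀ v ∈ S.erase z, t v = d v)
    (hdd : StepOn G k (S.erase z) d d') :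
    ∃ t', Relation.ReflTransGen (StepOn G k S) t t' ∧ PropOn G k S t' ∧
      ∀ v ∈ S.erase z, t' v = d' v := by
  obtain ⟨hd, hd', a, b, hab⟩ := hdd
  have hmem : ∀ v ∈ S, G.Adj z v → v ∈ S.erase z := fun v hv hzv =>
    Finset.mem_erase.2 ⟨fun h => G.loopless.irrefl _ (h ▸ hzv), hv⟩
  -- the case where the colour of z is outside
  have main : ∀ t : V → Fin k, PropOn G k S t → (∀ v ∈ S.erase z, t v = d v) →
      t z ≠ a → t z ≠ b → ∃ t', Relation.ReflTransGen (StepOn G k S) t t' ∧ PropOn G k S t' ∧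
      ∀ v ∈ S.erase z, t' v = d' v := by
    intro t ht htd hza hzb
    obtain ⟨t', h1, h2⟩ := lift_out hz ht htd hd' hab (t z) (Or.inl rfl) (by
      intro v hv hzv
      have hv' := hmem v hv hzv
      have := ht z hz v hv hzv
      rw [htd v hv'] at this
      rcases hab v hv' with h | h | h
      · rw [← h]; exact this.symm
      · rw [h.2]; exact hzb.symm
      · rw [h.2]; exact hza.symm)
    exact ⟨t', Relation.ReflTransGen.single h1, h1.2.1, h2⟩
  have main2 : ∀ a b : Fin k, (∀ v ∈ S.erase z, d v = d' v ∨ (d v = a ∧ d' v = b) ∨ (d v = b ∧ d' v = a)) →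
      (∀ t : V → Fin k, PropOn G k S t → (∀ v ∈ S.erase z, t v = d v) →
      t z ≠ a → t z ≠ b → ∃ t', Relation.ReflTransGen (StepOn G k S) t t' ∧ PropOn G k S t' ∧
      ∀ v ∈ S.erase z, t' v = d' v) → t z = a → ∃ t', Relation.ReflTransGen (StepOn G k S) t t' ∧ PropOn G k S t' ∧
      ∀ v ∈ S.erase z, t' v = d' v := by
    intro a b hab main hza
    by_cases hfree : ∃ e, e ≠ a ∧ e ≠ b ∧ ∀ v ∈ S, G.Adj z v → d v ≠ e
    · obtain ⟨e, he1, he2, he3⟩ := hfree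
      obtain ⟨t1, h1, h2⟩ := lift_out (d' := d) (a := a) (b := e) hz ht htd hd (fun v _ => Or.inl rfl) e
        (Or.inr (Or.inl ⟨hza, rfl⟩)) he3
      have h1z : t1 z = e ∨ ¬ (t1 z = e) := em _
      -- reuse the explicit function
      let t2 := Function.update t1 z e
      have ht2 : PropOn G k S t2 := by
        intro u hu v hv huv
        by_cases hu1 : u = z
        · subst hu1
          have hvu : v ≠ u := (Finset.mem_erase.1 (hmem v hv huv)).1
          simp only [t2, Function.update_self, Function.update_of_ne hvu]
          rw [h2 v (hmem v hv huv)]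
          exact (he3 v hv huv).symm
        · by_cases hv1 : v = z
          · subst hv1
            simp only [t2, Function.update_self, Function.update_of_ne hu1]
            rw [h2 u (hmem u hu huv.symm)]
            exact (he3 u hu huv.symm)
          · simp only [t2, Function.update_of_ne hu1, Function.update_of_ne hv1]
            exact h1.2.1 u hu v hv huv
      have ht2d : ∀ v ∈ S.erase z, t2 v = d v := by
        intro v hv
        simp only [t2, Function.update_of_ne (Finset.mem_erase.1 hv).1]
        exact h2 v hv
      obtain ⟨t', g1, g2, g3⟩ := main t2 ht2 ht2d (by simpa [t2] using he1) (by simpa [t2] using he2)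
      refine ⟨t', Relation.ReflTransGen.head ⟨ht, ht2, a, e, ?_⟩ g1, g2, g3⟩
      intro v hv
      by_cases hvz : v = z
      · subst hvz
        right; left
        exact ⟨hza, by simp [t2]⟩
      · left
        have := Finset.mem_erase.2 ⟨hvz, hv⟩
        rw [htd v this, ht2d v this]
    · push Not at hfree
      have huniq : ∀ y1 ∈ S, ∀ y2 ∈ S, G.Adj z y1 → G.Adj z y2 → d y1 = b → d y2 = b → y1 = y2 := by
        intro y1 hy1 y2 hy2 h1 h2 e1 e2
        by_contra hne
        have hsub : (Finset.univ : Finset (Fin k)) ⊆ insert a (((nb G z ∩ S).erase y1).image d) := by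
          intro e _
          by_cases hea : e = a
          · simp [hea]
          · apply Finset.mem_insert_of_mem
            by_cases heb : e = b
            · subst heb
              exact Finset.mem_image.2 ⟨y2, by simp [mem_nb, h2, hy2, Ne.symm hne], e2⟩
            · obtain ⟨v, hv, hzv, hve⟩ := hfree e hea heb
              refine Finset.mem_image.2 ⟨v, ?_, hve⟩
              simp only [Finset.mem_erase, Finset.mem_inter, mem_nb]
              refine ⟨?_, hzv, hv⟩
              rintro rfl
              exact heb (hve.symm.trans e1)
        have c1 := Finset.card_le_card hsub
        have c2 := Finset.card_insert_le a (((nb G z ∩ S).erase y1).image d)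
        have c3 : (((nb G z ∩ S).erase y1).image d).card ≤ ((nb G z ∩ S).erase y1).card :=
          Finset.card_image_le
        have hy1' : y1 ∈ nb G z ∩ S := by simp [mem_nb, h1, hy1]
        have c4 := Finset.card_erase_of_mem hy1'
        have c5 : 0 < (nb G z ∩ S).card := Finset.card_pos.2 ⟨_, hy1'⟩
        simp only [Finset.card_univ, Fintype.card_fin] at c1
        omega
      have hna : ∀ v ∈ S, G.Adj z v → d v ≠ a := by
        intro v hv hzv
        rw [← htd v (hmem v hv hzv), ← hza]
        exact (ht z hz v hv hzv).symm
      by_cases hy : ∃ y ∈ S, G.Adj z y ∧ d y = b ∧ d' y = a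
      · obtain ⟨y, hy, hzy, hyb, hya⟩ := hy
        obtain ⟨t', h1, h2⟩ := lift_out hz ht htd hd' hab b (Or.inr (Or.inl ⟨hza, rfl⟩)) (by
          intro v hv hzv hvb
          have hv' := hmem v hv hzv
          rcases hab v hv' with h | h | h
          · have := huniq y hy v hv hzy hzv hyb (h.trans hvb)
            subst this
            exact hna y hy hzy (h.trans hya)
          · exact hna v hv hzv h.1
          · exact hna v hv hzv (by rw [h.1, ← hvb, h.2]))
        exact ⟨t', Relation.ReflTransGen.single h1, h1.2.1, h2⟩
      · obtain ⟨t', h1, h2⟩ := lift_out hz ht htd hd' hab a (Or.inl hza) (by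
          intro v hv hzv hva
          have hv' := hmem v hv hzv
          rcases hab v hv' with h | h | h
          · exact hna v hv hzv (h.trans hva)
          · exact hna v hv hzv h.1
          · exact hy ⟨v, hv, hzv, h.1, h.2⟩)
        exact ⟨t', Relation.ReflTransGen.single h1, h1.2.1, h2⟩
  by_cases hza : t z = a
  · exact main2 a b hab main hza
  · by_cases hzb : t z = b
    · refine main2 b a ?_ ?_ hzb
      · intro v hv
        rcases hab v hv with h | h | h
        · exact Or.inl h
        · exact Or.inr (Or.inr h)
        · exact Or.inr (Or.inl h)
      · intro t h1 h2 h3 h4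
        exact main t h1 h2 h4 h3
    · exact main t ht htd hza hzb

/-- Las Vergnas and Meyniel: degenerate graphs have one Kempe class -/
theorem lvm [Fintype V] {G : SimpleGraph V} {k : ℕ} : ∀ (n : ℕ) (S : Finset V), S.card = n →
    (∀ T ⊆ S, T.Nonempty → ∃ z ∈ T, (nb G z ∩ T).card < k) →
    ∀ c c' : V → Fin k, PropOn G k S c → PropOn G k S c' →
      Relation.ReflTransGen (StepOn G k S) c c' := by
  intro n
  induction n with
  | zero =>
    intro S hS _ c c' h1 h2
    rw [Finset.card_eq_zero] at hS
    subst hS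
    by_cases hk : Nonempty (Fin k)
    · obtain ⟨a⟩ := hk
      exact Relation.ReflTransGen.single ⟨h1, h2, a, a, by simp⟩
    · have : c = c' := by
        funext v; exact absurd ⟨c v⟩ hk
      rw [this]
  | succ n ih =>
    intro S hS hdeg c c' hc hc'
    have hne : S.Nonempty := Finset.card_pos.1 (by omega)
    obtain ⟨z, hz, hzd⟩ := hdeg S subset_rfl hne
    have hsub : ∀ d, PropOn G k S d → PropOn G k (S.erase z) d := fun d hd u hu v hv =>
      hd u (Finset.mem_of_mem_erase hu) v (Finset.mem_of_mem_erase hv)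
    have hchain := ih (S.erase z) (by rw [Finset.card_erase_of_mem hz]; omega)
      (fun T hT => hdeg T (hT.trans (Finset.erase_subset _ _))) c c' (hsub c hc) (hsub c' hc')
    have hl : ∃ t', Relation.ReflTransGen (StepOn G k S) c t' ∧ PropOn G k S t' ∧
        ∀ v ∈ S.erase z, t' v = c' v := by
      clear hc'
      induction hchain with
      | refl => exact ⟨c, Relation.ReflTransGen.refl, hc, fun _ _ => rfl⟩
      | @tail d d' h1 h2 ih2 =>
        obtain ⟨t, g1, g2, g3⟩ := ih2
        obtain ⟨t', f1, f2, f3⟩ := lift_step hz hzd g2 g3 h2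
        exact ⟨t', g1.trans f1, f2, f3⟩
    obtain ⟨t', g1, g2, g3⟩ := hl
    refine g1.tail ⟨g2, hc', t' z, c' z, ?_⟩
    intro v hv
    by_cases h : v = z
    · subst h; right; left; exact ⟨rfl, rfl⟩
    · left; exact g3 v (Finset.mem_erase.2 ⟨h, hv⟩)


/-- the standing hypotheses on the graph -/
structure Good [Fintype V] (G : SimpleGraph V) (k : ℕ) : Prop where
  hk : 4 ≤ k
  reg : ∀ v, (nb G v).card = k
  sep : ∀ (p q : V) (F : Finset V), F.Nonempty → p ∉ F → q ∉ F →
    (∃ z, z ∉ F ∧ z ≠ p ∧ z ≠ q) → ∃ a ∈ F, ∃ b, b ∉ F ∧ b ≠ p ∧ b ≠ q ∧ G.Adj a b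

theorem good_of [Fintype V] {G : SimpleGraph V} [DecidableRel G.Adj] {k : ℕ} (hk : 4 ≤ k)
    (hreg : G.IsRegularOfDegree k) (h3 : ThreeConnected G) : Good G k := by
  refine ⟨hk, fun v => ?_, ?_⟩
  · rw [← hreg v, ← SimpleGraph.card_neighborFinset_eq_degree]
    congr 1
    ext w
    simp [mem_nb]
  · intro p q F hF hp hq ⟨z, hz, hzp, hzq⟩
    by_contra hcon
    push Not at hcon
    obtain ⟨a, ha⟩ := hF
    have hc := h3.2 {p, q} (by
      exact (Set.ncard_insert_le p {q}).trans (by simp))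
    have ha' : a ∈ ({p, q} : Set V)ᶜ := by
      simp only [Set.mem_compl_iff, Set.mem_insert_iff, Set.mem_singleton_iff]
      rintro (h | h)
      · exact hp (h ▸ ha)
      · exact hq (h ▸ ha)
    have hz' : z ∈ ({p, q} : Set V)ᶜ := by
      simp [hzp, hzq]
    obtain ⟨w⟩ := hc.preconnected ⟨a, ha'⟩ ⟨z, hz'⟩
    have : ∀ (s t : (({p, q} : Set V)ᶜ : Set V)) (w : (G.induce ({p, q} : Set V)ᶜ).Walk s t),
        s.1 ∈ F → t.1 ∈ F := by
      intro s t w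
      induction w with
      | nil => exact id
      | @cons s t r hst w ih =>
        intro hs
        apply ih
        by_contra ht
        have h2 := t.2
        simp only [Set.mem_compl_iff, Set.mem_insert_iff, Set.mem_singleton_iff, not_or] at h2
        exact hcon s hs t ht h2.1 h2.2 hst
    exact hz (this _ _ w ha)

theorem greedy [Fintype V] {G : SimpleGraph V} {k : ℕ} (c0 : V → Fin k) (B : Finset V) :
    ∀ (n : ℕ) (F : Finset V), F.card = n → Disjoint F B →
    (∀ T ⊆ F, T.Nonempty → ∃ z ∈ T, ((nb G z ∩ B).image c0).card + (nb G z ∩ T).card < k) →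
    ∃ c : V → Fin k, (∀ v, v ∉ F → c v = c0 v) ∧
      ∀ z ∈ F, ∀ y, (y ∈ F ∨ y ∈ B) → G.Adj z y → c z ≠ c y := by
  intro n
  induction n with
  | zero =>
    intro F hF _ _
    rw [Finset.card_eq_zero] at hF
    subst hF
    exact ⟨c0, fun _ _ => rfl, by simp⟩
  | succ n ih =>
    intro F hF hd hdeg
    have hne : F.Nonempty := Finset.card_pos.1 (by omega)
    obtain ⟨z, hz, hzd⟩ := hdeg F subset_rfl hne
    obtain ⟨c1, h1, h2⟩ := ih (F.erase z) (by rw [Finset.card_erase_of_mem hz]; omega)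
      (hd.mono_left (Finset.erase_subset _ _))
      (fun T hT => hdeg T (hT.trans (Finset.erase_subset _ _)))
    have hfree : ∃ e, e ∉ (nb G z ∩ B).image c0 ∪ (nb G z ∩ F).image c1 := by
      by_contra hcon
      push Not at hcon
      have c1' := Finset.card_le_card (fun e (_ : e ∈ (Finset.univ : Finset (Fin k))) => hcon e)
      have c2 := Finset.card_union_le ((nb G z ∩ B).image c0) ((nb G z ∩ F).image c1)
      have c3 : ((nb G z ∩ F).image c1).card ≤ _ := Finset.card_image_le
      simp only [Finset.card_univ, Fintype.card_fin] at c1'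
      omega
    obtain ⟨e, he⟩ := hfree
    rw [Finset.mem_union, not_or] at he
    have hzB : z ∉ B := Finset.disjoint_left.1 hd hz
    have hB : ∀ y ∈ B, c1 y = c0 y := fun y hy => h1 y
      (fun h => Finset.disjoint_left.1 hd (Finset.mem_of_mem_erase h) hy)
    have hzy : ∀ y, (y ∈ F ∨ y ∈ B) → G.Adj z y → e ≠ c1 y := by
      rintro y (hy | hy) hadj rfl
      · exact he.2 (Finset.mem_image.2 ⟨y, by simp [mem_nb, hadj, hy], rfl⟩)
      · exact he.1 (Finset.mem_image.2 ⟨y, by simp [mem_nb, hadj, hy], (hB y hy).symm⟩)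
    refine ⟨Function.update c1 z e, ?_, ?_⟩
    · intro v hv
      have : v ≠ z := fun h => hv (h ▸ hz)
      rw [Function.update_of_ne this]
      exact h1 v (fun h => hv (Finset.mem_of_mem_erase h))
    · intro s hs y hy hadj
      by_cases hsz : s = z
      · subst hsz
        rw [Function.update_self, Function.update_of_ne hadj.ne']
        exact hzy y hy hadj
      · rw [Function.update_of_ne hsz]
        by_cases hyz : y = z
        · subst hyz
          rw [Function.update_self]
          exact (hzy s (Or.inl hs) hadj.symm).symm
        · rw [Function.update_of_ne hyz]
          refine h2 s (Finset.mem_erase.2 ⟨hsz, hs⟩) y ?_ hadj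
          rcases hy with hy | hy
          · exact Or.inl (Finset.mem_erase.2 ⟨hyz, hy⟩)
          · exact Or.inr hy

section
variable [Fintype V] {G : SimpleGraph V} {k : ℕ}

theorem deg2 (hG : Good G k) {p q m : V} (hpq : p ≠ q) (hmp : G.Adj m p) (hmq : G.Adj m q)
    (T : Finset V) (hT : T.Nonempty) (hp : p ∉ T) (hq : q ∉ T) :
    ∃ z ∈ T, (nb G z ∩ T).card + (if G.Adj z p ∨ G.Adj z q then 1 else 0) < k := by
  by_cases h : ∃ z, z ∉ T ∧ z ≠ p ∧ z ≠ q
  · obtain ⟨a, ha, b, hb, hbp, hbq, hab⟩ := hG.sep p q T hT hp hq h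
    refine ⟨a, ha, ?_⟩
    have hr := hG.reg a
    by_cases h1 : G.Adj a p ∨ G.Adj a q
    · rw [if_pos h1]
      obtain ⟨r, hr1, hr2, hr3⟩ : ∃ r, G.Adj a r ∧ r ∉ T ∧ b ≠ r := by
        rcases h1 with h1 | h1
        · exact ⟨p, h1, hp, hbp⟩
        · exact ⟨q, h1, hq, hbq⟩
      have : insert b (insert r (nb G a ∩ T)) ⊆ nb G a := by
        intro s
        simp only [Finset.mem_insert, Finset.mem_inter, mem_nb]
        rintro (rfl | rfl | h)
        · exact hab
        · exact hr1
        · exact h.1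
      have := Finset.card_le_card this
      rw [Finset.card_insert_of_notMem, Finset.card_insert_of_notMem] at this
      · omega
      · simp [hr2]
      · simp [hb, hr3]
    · rw [if_neg h1]
      have : insert b (nb G a ∩ T) ⊆ nb G a := by
        intro s
        simp only [Finset.mem_insert, Finset.mem_inter, mem_nb]
        rintro (rfl | h)
        · exact hab
        · exact h.1
      have := Finset.card_le_card this
      rw [Finset.card_insert_of_notMem] at this
      · omega
      · simp [hb]
  · push Not at h
    have hm : m ∈ T := by
      by_contra hm
      exact hmq.ne (h m hm hmp.ne)
    refine ⟨m, hm, ?_⟩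
    rw [if_pos (Or.inl hmp)]
    have : insert p (insert q (nb G m ∩ T)) ⊆ nb G m := by
      intro s
      simp only [Finset.mem_insert, Finset.mem_inter, mem_nb]
      rintro (rfl | rfl | h)
      · exact hmp
      · exact hmq
      · exact h.1
    have := Finset.card_le_card this
    have hr := hG.reg m
    rw [Finset.card_insert_of_notMem, Finset.card_insert_of_notMem] at this
    · omega
    · simp [hq]
    · simp [hp, hpq]

theorem L1 (hG : Good G k) {p q m : V} (hpq : p ≠ q) (hmp : G.Adj m p) (hmq : G.Adj m q)
    {c c' : V → Fin k} (hc : IsProperColoring G k c) (hc' : IsProperColoring G k c')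
    (hcc : c p = c q) (hcc' : c' p = c' q) : KE G k c c' := by
  have hna : ¬ G.Adj p q := fun hh => hc hh hcc
  let G' : SimpleGraph V :=
    { Adj := fun u v => G.Adj u v ∨ (u = p ∧ G.Adj q v) ∨ (v = p ∧ G.Adj q u)
      symm := ⟨by
        rintro u v (h | h | h)
        · exact Or.inl h.symm
        · exact Or.inr (Or.inr h)
        · exact Or.inr (Or.inl h)⟩
      loopless := ⟨by
        rintro u (h | ⟨rfl, h⟩ | ⟨rfl, h⟩)
        · exact h.ne rfl
        · exact hna h.symm
        · exact hna h.symm⟩ }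
  have hprop : ∀ d, IsProperColoring G k d → d p = d q → PropOn G' k (Finset.univ.erase q) d := by
    rintro d hd hdd u hu v hv (h | ⟨rfl, h⟩ | ⟨rfl, h⟩)
    · exact hd h
    · rw [hdd]; exact hd h
    · rw [hdd]; exact (hd h).symm
  have hch := lvm (G := G') (k := k) _ (Finset.univ.erase q) rfl (by
    intro T hT hne
    have hqT : q ∉ T := fun hh => (Finset.mem_erase.1 (hT hh)).1 rfl
    by_cases he : (T.erase p).Nonempty
    · obtain ⟨z, hz, hzd⟩ := deg2 hG hpq hmp hmq (T.erase p) he (by simp) (by simp [hqT])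
      refine ⟨z, Finset.mem_of_mem_erase hz, lt_of_le_of_lt ?_ hzd⟩
      have hzp := (Finset.mem_erase.1 hz).1
      by_cases ha : G.Adj z p ∨ G.Adj z q
      · rw [if_pos ha]
        have : nb G' z ∩ T ⊆ insert p (nb G z ∩ T.erase p) := by
          intro s
          simp only [Finset.mem_insert, Finset.mem_inter, mem_nb, Finset.mem_erase]
          rintro ⟨h | h | h, hs⟩
          · by_cases hsp : s = p
            · exact Or.inl hsp
            · exact Or.inr ⟨h, hsp, hs⟩
          · exact absurd h.1 hzp
          · exact Or.inl h.1
        exact (Finset.card_le_card this).trans (Finset.card_insert_le _ _)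
      · rw [if_neg ha]
        apply Finset.card_le_card
        intro s
        simp only [Finset.mem_inter, mem_nb, Finset.mem_erase]
        rintro ⟨h | h | h, hs⟩
        · refine ⟨h, ?_, hs⟩
          rintro rfl
          exact ha (Or.inl h)
        · exact absurd h.1 hzp
        · exact absurd (Or.inr h.2.symm) ha
    · obtain ⟨z, hz⟩ := hne
      refine ⟨z, hz, ?_⟩
      have : nb G' z ∩ T ⊆ ∅ := by
        intro s
        simp only [Finset.mem_inter, mem_nb]
        rintro ⟨h, hs⟩
        rw [Finset.not_nonempty_iff_eq_empty, Finset.erase_eq_empty_iff] at he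
        rcases he with he | he
        · simp [he] at hs
        · rw [he, Finset.mem_singleton] at hs hz
          rw [hs, hz] at h
          exact absurd rfl h.ne
      have h5 := Finset.card_le_card this
      have := hG.hk
      rw [Finset.card_empty] at h5
      omega) c c' (hprop c hc hcc) (hprop c' hc' hcc')
  let li : (V → Fin k) → V → Fin k := fun d => Function.update d q (d p)
  have hli : ∀ d, PropOn G' k (Finset.univ.erase q) d → IsProperColoring G k (li d) := by
    intro d hd u v huv
    simp only [li]
    by_cases hu : u = q
    · subst hu
      rw [Function.update_self, Function.update_of_ne huv.ne']
      exact hd p (by simp [hpq]) v (by simp [huv.ne']) (Or.inr (Or.inl ⟨rfl, huv⟩))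
    · by_cases hv : v = q
      · subst hv
        rw [Function.update_self, Function.update_of_ne huv.ne]
        exact hd u (by simp [huv.ne]) p (by simp [hpq]) (Or.inr (Or.inr ⟨rfl, huv.symm⟩))
      · rw [Function.update_of_ne hu, Function.update_of_ne hv]
        exact hd u (by simp [hu]) v (by simp [hv]) (Or.inl huv)
  have hfin : ∀ d, Relation.ReflTransGen (StepOn G' k (Finset.univ.erase q)) c d →
      KE G k (li c) (li d) := by
    intro d hd
    induction hd with
    | refl => exact Relation.ReflTransGen.refl
    | @tail d d' h1 h2 ih =>
      refine Relation.ReflTransGen.tail ih ⟨hli d h2.1, hli d' h2.2.1, ?_⟩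
      obtain ⟨a, b, hab⟩ := h2.2.2
      refine ⟨a, b, fun v => ?_⟩
      by_cases hv : v = q
      · subst hv
        simp only [li, Function.update_self]
        exact hab p (by simp [hpq])
      · simp only [li, Function.update_of_ne hv]
        exact hab v (by simp [hv])
  have := hfin c' hch
  have e1 : li c = c := by simp [li, hcc]
  have e2 : li c' = c' := by simp [li, hcc']
  rwa [e1, e2] at this

theorem exists_alike (hG : Good G k) {p q m : V} (hpq : p ≠ q) (hna : ¬ G.Adj p q)
    (hmp : G.Adj m p) (hmq : G.Adj m q) :
    ∃ c : V → Fin k, IsProperColoring G k c ∧ c p = c q := by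
  have h0 : 0 < k := by have := hG.hk; omega
  let S : Finset V := {p, q}
  obtain ⟨c, h1, h2⟩ := greedy (G := G) (fun _ => (⟨0, h0⟩ : Fin k)) S _ (Finset.univ \ S) rfl
    Finset.sdiff_disjoint (by
      intro T hT hne
      obtain ⟨z, hz, hzd⟩ := deg2 hG hpq hmp hmq T hne
        (fun h => by have := hT h; simp [S] at this) (fun h => by have := hT h; simp [S] at this)
      refine ⟨z, hz, lt_of_le_of_lt ?_ hzd⟩
      rw [add_comm]
      apply Nat.add_le_add_left
      by_cases ha : G.Adj z p ∨ G.Adj z q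
      · rw [if_pos ha]
        have : (nb G z ∩ S).image (fun _ => (⟨0, h0⟩ : Fin k)) ⊆ {⟨0, h0⟩} := by
          intro e; simp only [Finset.mem_image, Finset.mem_singleton]
          rintro ⟨_, _, h⟩; exact h.symm
        exact Finset.card_le_card this
      · rw [if_neg ha]
        rw [not_or] at ha
        have : nb G z ∩ S = ∅ := by
          ext s
          simp only [Finset.mem_inter, mem_nb, S, Finset.mem_insert, Finset.mem_singleton, Finset.notMem_empty, iff_false]
          rintro ⟨h, rfl | rfl⟩
          · exact ha.1 h
          · exact ha.2 h
        simp [this])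
  have hp : c p = c q := by rw [h1 p (by simp [S]), h1 q (by simp [S])]
  refine ⟨c, ?_, hp⟩
  intro s t hst
  by_cases hs : s ∈ S
  · by_cases ht : t ∈ S
    · simp only [S, Finset.mem_insert, Finset.mem_singleton] at hs ht
      rcases hs with rfl | rfl <;> rcases ht with rfl | rfl
      · exact absurd rfl hst.ne
      · exact absurd hst hna
      · exact absurd hst.symm hna
      · exact absurd rfl hst.ne
    · exact (h2 t (by simp [ht]) s (Or.inr hs) hst.symm).symm
  · refine h2 s (by simp [hs]) t ?_ hst
    by_cases ht : t ∈ S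
    · exact Or.inr ht
    · left; simp [ht]

end


section
variable [Fintype V] {G : SimpleGraph V} {k : ℕ}

/-- a partial colouring of the four special vertices extends to `D` -/
def Ext (G : SimpleGraph V) (k : ℕ) (x y w1 w2 : V) (e f : Fin k) (D : Finset V) : Prop :=
  ∃ c : V → Fin k, c x = e ∧ c y = e ∧ c w1 = f ∧ c w2 = f ∧
    ∀ z ∈ D, ∀ t, G.Adj z t → c z ≠ c t

structure Quad (G : SimpleGraph V) (k : ℕ) (x y w1 w2 u v : V) (α γ : V → Fin k) (e f : Fin k)
    (D : Finset V) : Prop where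
  good : Good G k
  xy : x ≠ y
  ww : w1 ≠ w2
  xw1 : x ≠ w1
  xw2 : x ≠ w2
  yw1 : y ≠ w1
  yw2 : y ≠ w2
  uv : u ≠ v
  ux : G.Adj u x
  uy : G.Adj u y
  uw1 : u ≠ w1
  uw2 : u ≠ w2
  vw1 : G.Adj v w1
  vw2 : G.Adj v w2
  vx : v ≠ x
  vy : v ≠ y
  hα : IsProperColoring G k α
  hαx : α x = α y
  hγ : IsProperColoring G k γ
  hγw : γ w1 = γ w2
  nke : ¬ KE G k α γ
  ef : e ≠ f
  dx : x ∉ D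
  dy : y ∉ D
  dw1 : w1 ∉ D
  dw2 : w2 ∉ D
  closed : ∀ z ∈ D, ∀ t, G.Adj z t → t ∈ D ∨ t = x ∨ t = y ∨ t = w1 ∨ t = w2
  nonext : ¬ Ext G k x y w1 w2 e f D

variable {x y w1 w2 u v : V} {α γ : V → Fin k} {e f : Fin k} {D : Finset V}

theorem Quad.swapX (Q : Quad G k x y w1 w2 u v α γ e f D) :
    Quad G k y x w1 w2 u v α γ e f D := by
  refine ⟨Q.good, Q.xy.symm, Q.ww, Q.yw1, Q.yw2, Q.xw1, Q.xw2, Q.uv, Q.uy, Q.ux, Q.uw1, Q.uw2,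
    Q.vw1, Q.vw2, Q.vy, Q.vx, Q.hα, Q.hαx.symm, Q.hγ, Q.hγw, Q.nke, Q.ef, Q.dy, Q.dx, Q.dw1, Q.dw2,
    ?_, ?_⟩
  · intro z hz t h
    have := Q.closed z hz t h
    tauto
  · rintro ⟨c, h1, h2, h3⟩
    exact Q.nonext ⟨c, h2, h1, h3⟩

theorem Quad.swapP (Q : Quad G k x y w1 w2 u v α γ e f D) :
    Quad G k w1 w2 x y v u γ α f e D := by
  refine ⟨Q.good, Q.ww, Q.xy, Q.xw1.symm, Q.yw1.symm, Q.xw2.symm, Q.yw2.symm, Q.uv.symm, Q.vw1,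
    Q.vw2, Q.vx, Q.vy, Q.ux, Q.uy, Q.uw1, Q.uw2, Q.hγ, Q.hγw, Q.hα, Q.hαx, fun h => Q.nke h.symm,
    Q.ef.symm, Q.dw1, Q.dw2, Q.dx, Q.dy, ?_, ?_⟩
  · intro z hz t h
    have := Q.closed z hz t h
    tauto
  · rintro ⟨c, h1, h2, h3, h4, h5⟩
    exact Q.nonext ⟨c, h3, h4, h1, h2, h5⟩

theorem Quad.swapW (Q : Quad G k x y w1 w2 u v α γ e f D) :
    Quad G k x y w2 w1 u v α γ e f D := Q.swapP.swapX.swapP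

/-- global minimality -/
def Min (G : SimpleGraph V) (k n : ℕ) : Prop :=
  ∀ (x y w1 w2 u v : V) (α γ : V → Fin k) (e f : Fin k) (D : Finset V),
    Quad G k x y w1 w2 u v α γ e f D → n ≤ D.card

theorem Quad.conn (Q : Quad G k x y w1 w2 u v α γ e f D)
    (hm : ∀ F, F ⊂ D → ¬ Quad G k x y w1 w2 u v α γ e f F) (F : Finset V) (hF : F ⊆ D)
    (hne : F.Nonempty) (hnD : F ≠ D) : ∃ a ∈ F, ∃ b ∈ D, b ∉ F ∧ G.Adj a b := by
  by_contra hcon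
  push Not at hcon
  have key : ∀ F, F ⊂ D → (∀ a ∈ F, ∀ b ∈ D, b ∉ F → ¬ G.Adj a b) →
      Ext G k x y w1 w2 e f F := by
    intro F hF hc
    by_contra hx
    refine hm F hF ⟨Q.good, Q.xy, Q.ww, Q.xw1, Q.xw2, Q.yw1, Q.yw2, Q.uv, Q.ux, Q.uy, Q.uw1, Q.uw2,
      Q.vw1, Q.vw2, Q.vx, Q.vy, Q.hα, Q.hαx, Q.hγ, Q.hγw, Q.nke, Q.ef, fun h => Q.dx (hF.1 h),
      fun h => Q.dy (hF.1 h), fun h => Q.dw1 (hF.1 h), fun h => Q.dw2 (hF.1 h), ?_, hx⟩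
    intro z hz t hzt
    rcases Q.closed z (hF.1 hz) t hzt with h | h
    · left
      by_contra ht
      exact hc z hz t h ht hzt
    · exact Or.inr h
  obtain ⟨c1, a1, a2, a3, a4, a5⟩ := key F (hF.ssubset_of_ne hnD) hcon
  obtain ⟨c2, b1, b2, b3, b4, b5⟩ := key (D \ F) (by
      refine (Finset.sdiff_subset).ssubset_of_ne ?_
      intro h
      obtain ⟨a, ha⟩ := hne
      have := hF ha
      rw [← h] at this
      exact (Finset.mem_sdiff.1 this).2 ha) (by
      intro a ha b hb hbF hab
      rw [Finset.mem_sdiff] at ha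
      have : b ∈ F := by
        by_contra h
        exact hbF (Finset.mem_sdiff.2 ⟨hb, h⟩)
      exact hcon b this a ha.1 ha.2 hab.symm)
  have hx : x ∉ F := fun h => Q.dx (hF h)
  have hy : y ∉ F := fun h => Q.dy (hF h)
  have hw1 : w1 ∉ F := fun h => Q.dw1 (hF h)
  have hw2 : w2 ∉ F := fun h => Q.dw2 (hF h)
  apply Q.nonext
  refine ⟨fun z => if z ∈ F then c1 z else c2 z, by simp [hx, b1], by simp [hy, b2], by simp [hw1, b3],
    by simp [hw2, b4], ?_⟩
  intro z hz t hzt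
  have hcl := Q.closed z hz t hzt
  by_cases hzF : z ∈ F
  · have h5 := a5 z hzF t hzt
    by_cases htF : t ∈ F
    · simpa [hzF, htF] using h5
    · simp only [hzF, htF, if_true, if_false]
      rcases hcl with h | rfl | rfl | rfl | rfl
      · exact absurd hzt (hcon z hzF t h htF)
      · rw [b1, ← a1]; exact h5
      · rw [b2, ← a2]; exact h5
      · rw [b3, ← a3]; exact h5
      · rw [b4, ← a4]; exact h5
  · have h5 := b5 z (Finset.mem_sdiff.2 ⟨hz, hzF⟩) t hzt
    by_cases htF : t ∈ F
    · exact absurd hzt.symm (hcon t htF z hz hzF)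
    · simpa [hzF, htF] using h5

theorem slack1 (hG : Good G k) {c0 : V → Fin k} {B T : Finset V} (hBT : Disjoint B T) {z b : V}
    (hb : G.Adj z b) (hbT : b ∉ T) (hbB : b ∉ B) :
    ((nb G z ∩ B).image c0).card + (nb G z ∩ T).card < k := by
  have h1 : ((nb G z ∩ B).image c0).card ≤ _ := Finset.card_image_le
  have h2 : insert b ((nb G z ∩ B) ∪ (nb G z ∩ T)) ⊆ nb G z := by
    intro s
    simp only [Finset.mem_insert, Finset.mem_union, Finset.mem_inter, mem_nb]
    rintro (rfl | h | h)
    · exact hb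
    · exact h.1
    · exact h.1
  have h3 := Finset.card_le_card h2
  rw [Finset.card_insert_of_notMem (by simp [hbT, hbB]), Finset.card_union_of_disjoint
    (hBT.mono Finset.inter_subset_right Finset.inter_subset_right), hG.reg z] at h3
  omega

theorem slack2 (hG : Good G k) {c0 : V → Fin k} {B T : Finset V} (hBT : Disjoint B T) {z b b' : V}
    (hb : G.Adj z b) (hb' : G.Adj z b') (hbB : b ∈ B) (hbB' : b' ∈ B) (hne : b ≠ b')
    (hc : c0 b = c0 b') :
    ((nb G z ∩ B).image c0).card + (nb G z ∩ T).card < k := by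
  have h0 : (nb G z ∩ B).image c0 ⊆ ((nb G z ∩ B).erase b).image c0 := by
    intro s
    simp only [Finset.mem_image]
    rintro ⟨r, hr, rfl⟩
    by_cases h : r = b
    · refine ⟨b', ?_, by rw [h, hc]⟩
      simp [hne.symm, mem_nb, hb', hbB']
    · exact ⟨r, by simp only [Finset.mem_erase]; exact ⟨h, hr⟩, rfl⟩
  have h1 : (((nb G z ∩ B).erase b).image c0).card ≤ _ := Finset.card_image_le
  have h1' := Finset.card_le_card h0
  have hbm : b ∈ nb G z ∩ B := by simp [mem_nb, hb, hbB]
  rw [Finset.card_erase_of_mem hbm] at h1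
  have h1'' : 0 < (nb G z ∩ B).card := Finset.card_pos.2 ⟨_, hbm⟩
  have h2 : ((nb G z ∩ B) ∪ (nb G z ∩ T)) ⊆ nb G z := by
    intro s
    simp only [Finset.mem_union, Finset.mem_inter, mem_nb]
    rintro (h | h)
    · exact h.1
    · exact h.1
  have h3 := Finset.card_le_card h2
  rw [Finset.card_union_of_disjoint
    (hBT.mono Finset.inter_subset_right Finset.inter_subset_right), hG.reg z] at h3
  omega

/-- greedy extension with some vertices `P` of `D` precoloured -/
theorem Quad.extend (Q : Quad G k x y w1 w2 u v α γ e f D) (P : Finset V) (c0 : V → Fin k)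
    (hx : c0 x = e) (hy : c0 y = e) (hw1 : c0 w1 = f) (hw2 : c0 w2 = f)
    (hP : ∀ z ∈ P, z ∈ D → ∀ t, t ∉ D \ P → G.Adj z t → c0 z ≠ c0 t)
    (hdeg : ∀ B : Finset V, (∀ b, b ∈ B ↔ (b = x ∨ b = y ∨ b = w1 ∨ b = w2 ∨ b ∈ P)) →
      ∀ T ⊆ D \ P, T.Nonempty → Disjoint B T →
      ∃ z ∈ T, ((nb G z ∩ B).image c0).card + (nb G z ∩ T).card < k) : False := by
  have hB : ∀ b, b ∈ ({x, y, w1, w2} ∪ P : Finset V) ↔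
      (b = x ∨ b = y ∨ b = w1 ∨ b = w2 ∨ b ∈ P) := by
    intro b
    simp only [Finset.mem_union, Finset.mem_insert, Finset.mem_singleton]
    tauto
  have hdis : Disjoint (D \ P) ({x, y, w1, w2} ∪ P : Finset V) := by
    rw [Finset.disjoint_left]
    intro s hs hs'
    rw [Finset.mem_sdiff] at hs
    rw [hB] at hs'
    rcases hs' with rfl | rfl | rfl | rfl | h
    · exact Q.dx hs.1
    · exact Q.dy hs.1
    · exact Q.dw1 hs.1
    · exact Q.dw2 hs.1
    · exact hs.2 h
  obtain ⟨c, h1, h2⟩ := greedy (G := G) c0 ({x, y, w1, w2} ∪ P) _ (D \ P) rfl hdis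
    (fun T hT hne => hdeg _ hB T hT hne (hdis.mono_left hT).symm)
  apply Q.nonext
  refine ⟨c, ?_, ?_, ?_, ?_, ?_⟩
  · rw [h1, hx]; simp [Q.dx]
  · rw [h1, hy]; simp [Q.dy]
  · rw [h1, hw1]; simp [Q.dw1]
  · rw [h1, hw2]; simp [Q.dw2]
  · intro z hz t hzt
    by_cases hzP : z ∈ P
    · by_cases ht : t ∈ D \ P
      · refine (h2 t ht z (Or.inr ?_) hzt.symm).symm
        rw [hB]; tauto
      · rw [h1 z (by simp [hzP]), h1 t ht]
        exact hP z hzP hz t ht hzt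
    · refine h2 z (by simp [hz, hzP]) t ?_ hzt
      rcases Q.closed z hz t hzt with h | h
      · by_cases htP : t ∈ P
        · right; rw [hB]; tauto
        · left; simp [h, htP]
      · right; rw [hB]; tauto

/-- the basic colouring of the four special vertices -/
noncomputable def base (x y : V) (e f : Fin k) : V → Fin k := fun z => if z = x ∨ z = y then e else f

theorem Quad.slack (Q : Quad G k x y w1 w2 u v α γ e f D)
    (hm : ∀ F, F ⊂ D → ¬ Quad G k x y w1 w2 u v α γ e f F) {z : V} (hz : z ∈ D)
    (hzx : G.Adj z x) (hzy : G.Adj z y) : False := by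
  refine Q.extend ∅ (base x y e f) (by simp [base]) (by simp [base])
    (by simp [base, Q.xw1.symm, Q.yw1.symm]) (by simp [base, Q.xw2.symm, Q.yw2.symm]) (by simp) ?_
  intro B hB T hT hne hd
  rw [Finset.sdiff_empty] at hT
  by_cases h : T = D
  · refine ⟨z, h ▸ hz, slack2 Q.good hd hzx hzy (by simp [hB]) (by simp [hB]) Q.xy (by simp [base])⟩
  · obtain ⟨a, ha, b, hb, hbT, hab⟩ := Q.conn hm T hT hne h
    refine ⟨a, ha, slack1 Q.good hd hab hbT ?_⟩
    rw [hB]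
    rintro (rfl | rfl | rfl | rfl | h)
    · exact Q.dx hb
    · exact Q.dy hb
    · exact Q.dw1 hb
    · exact Q.dw2 hb
    · simp at h

theorem Quad.nonempty (Q : Quad G k x y w1 w2 u v α γ e f D) : D.Nonempty := by
  rw [Finset.nonempty_iff_ne_empty]
  rintro rfl
  exact Q.nonext ⟨base x y e f, by simp [base], by simp [base],
    by simp [base, Q.xw1.symm, Q.yw1.symm], by simp [base, Q.xw2.symm, Q.yw2.symm], by simp⟩

theorem Quad.swapMin (hm : ∀ F, F ⊂ D → ¬ Quad G k x y w1 w2 u v α γ e f F) :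
    ∀ F, F ⊂ D → ¬ Quad G k w1 w2 x y v u γ α f e F :=
  fun F hF Q => hm F hF Q.swapP

theorem Quad.slack' (Q : Quad G k x y w1 w2 u v α γ e f D)
    (hm : ∀ F, F ⊂ D → ¬ Quad G k x y w1 w2 u v α γ e f F) {z : V} (hz : z ∈ D)
    (hzx : G.Adj z w1) (hzy : G.Adj z w2) : False :=
  Q.swapP.slack (Quad.swapMin hm) hz hzx hzy

/-- full complement is never extendable -/
theorem nonext_univ (hG : Good G k) (hww : w1 ≠ w2) (hxy : x ≠ y)
    (hα : IsProperColoring G k α) (hαx : α x = α y) (hγ : IsProperColoring G k γ)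
    (hγw : γ w1 = γ w2) (nke : ¬ KE G k α γ) (ux : G.Adj u x) (uy : G.Adj u y) (vw1 : G.Adj v w1)
    (vw2 : G.Adj v w2) (hef : e ≠ f) :
    ¬ Ext G k x y w1 w2 e f (Finset.univ \ {x, y, w1, w2}) := by
  rintro ⟨c, h1, h2, h3, h4, h5⟩
  have hc : IsProperColoring G k c := by
    intro s t hst
    by_cases hs : s ∈ ({x, y, w1, w2} : Finset V)
    · by_cases ht : t ∈ ({x, y, w1, w2} : Finset V)
      · have nxy : ¬ G.Adj x y := fun h => hα h hαx
        have nww : ¬ G.Adj w1 w2 := fun h => hγ h hγw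
        simp only [Finset.mem_insert, Finset.mem_singleton] at hs ht
        rcases hs with rfl | rfl | rfl | rfl <;> rcases ht with rfl | rfl | rfl | rfl <;>
          first
          | exact absurd rfl hst.ne
          | exact absurd hst nxy
          | exact absurd hst.symm nxy
          | exact absurd hst nww
          | exact absurd hst.symm nww
          | (simp only [h1, h2, h3, h4]; exact hef)
          | (simp only [h1, h2, h3, h4]; exact hef.symm)
      · exact (h5 t (by simpa using ht) s hst.symm).symm
    · exact h5 s (by simpa using hs) t hst
  exact nke ((L1 hG hxy ux uy hα hc hαx (by rw [h1, h2])).trans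
    (L1 hG hww vw1 vw2 hc hγ (by rw [h3, h4]) hγw))

theorem Quad.rainbow (Q : Quad G k x y w1 w2 u v α γ e f D) (hM : Min G k D.card)
    (hm : ∀ F, F ⊂ D → ¬ Quad G k x y w1 w2 u v α γ e f F)
    {t p q : V} (ht : t ∈ D) (hp : p ∈ D) (hq : q ∈ D) (hpq : p ≠ q) (htp : G.Adj t p)
    (htq : G.Adj t q) : α p ≠ α q := by
  intro hα
  have huD : u ∉ D := fun h => Q.slack hm h Q.ux Q.uy
  have hvD : v ∉ D := fun h => Q.slack' hm h Q.vw1 Q.vw2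
  have neD : ∀ {a b : V}, a ∈ D → b ∉ D → a ≠ b := fun ha hb h => hb (h ▸ ha)
  have Q0 : Quad G k p q w1 w2 t v α γ e f (Finset.univ \ {p, q, w1, w2}) := by
    refine ⟨Q.good, hpq, Q.ww, neD hp Q.dw1, neD hp Q.dw2, neD hq Q.dw1, neD hq Q.dw2,
      neD ht hvD, htp, htq, neD ht Q.dw1, neD ht Q.dw2, Q.vw1, Q.vw2, (neD hp hvD).symm,
      (neD hq hvD).symm, Q.hα, hα, Q.hγ, Q.hγw, Q.nke, Q.ef, by simp, by simp, by simp, by simp, ?_,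
      nonext_univ Q.good Q.ww hpq Q.hα hα Q.hγ Q.hγw Q.nke htp htq Q.vw1 Q.vw2 Q.ef⟩
    intro z _ s _
    simp only [Finset.mem_sdiff, Finset.mem_univ, true_and, Finset.mem_insert,
      Finset.mem_singleton]
    tauto
  obtain ⟨D', hD', hmin⟩ : ∃ D', Quad G k p q w1 w2 t v α γ e f D' ∧
      ∀ F, F ⊂ D' → ¬ Quad G k p q w1 w2 t v α γ e f F := by
    have : ∀ (n : ℕ) (D : Finset V), D.card = n → Quad G k p q w1 w2 t v α γ e f D →
        ∃ D', Quad G k p q w1 w2 t v α γ e f D' ∧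
          ∀ F, F ⊂ D' → ¬ Quad G k p q w1 w2 t v α γ e f F := by
      intro n
      induction n using Nat.strong_induction_on with
      | _ n ih =>
      intro D hD hQ
      by_cases h : ∃ F, F ⊂ D ∧ Quad G k p q w1 w2 t v α γ e f F
      · obtain ⟨F, hF, hF'⟩ := h
        exact ih _ (hD ▸ Finset.card_lt_card hF) F rfl hF'
      · push Not at h
        exact ⟨D, hQ, h⟩
    exact this _ _ rfl Q0
  have hvD' : v ∉ D' := fun h => hD'.slack' hmin h Q.vw1 Q.vw2
  have hsub : D' ⊆ D := by
    by_contra hns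
    rw [Finset.not_subset] at hns
    obtain ⟨z, hz, hzD⟩ := hns
    have hcl : ∀ a ∈ D', ∀ b, b ∉ D → b ≠ w1 → b ≠ w2 → G.Adj a b → b ∈ D' := by
      intro a ha b hb h1 h2 hab
      rcases hD'.closed a ha b hab with h | rfl | rfl | h | h
      · exact h
      · exact absurd hp hb
      · exact absurd hq hb
      · exact absurd h h1
      · exact absurd h h2
    have hxu : x ∈ D' ↔ u ∈ D' :=
      ⟨fun h => hcl x h u huD Q.uw1 Q.uw2 Q.ux.symm, fun h => hcl u h x Q.dx Q.xw1 Q.xw2 Q.ux⟩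
    have hyu : y ∈ D' ↔ u ∈ D' :=
      ⟨fun h => hcl y h u huD Q.uw1 Q.uw2 Q.uy.symm, fun h => hcl u h y Q.dy Q.yw1 Q.yw2 Q.uy⟩
    have hDout : ∀ a b, a ∉ D → b ∈ D → a ≠ w1 → a ≠ w2 → G.Adj a b → a = x ∨ a = y := by
      intro a b ha hb h1 h2 hab
      have := Q.closed b hb a hab.symm
      tauto
    by_cases hx : x ∈ D'
    · -- the complement part
      let F : Finset V := Finset.univ.filter (fun a => a ∉ D ∧ a ≠ w1 ∧ a ≠ w2 ∧ a ∉ D')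
      have hF : ∀ a, a ∈ F ↔ (a ∉ D ∧ a ≠ w1 ∧ a ≠ w2 ∧ a ∉ D') := by intro a; simp [F]
      obtain ⟨a, ha, b, hb, hb1, hb2, hab⟩ := Q.good.sep w1 w2 F
        ⟨v, (hF v).2 ⟨hvD, Q.vw1.ne, Q.vw2.ne, hvD'⟩⟩ (by simp [hF]) (by simp [hF])
        ⟨x, by simp [hF, hx], Q.xw1, Q.xw2⟩
      rw [hF] at ha hb
      obtain ⟨a1, a2, a3, a4⟩ := ha
      have hbD : b ∉ D := by
        intro h
        rcases hDout a b a1 h a2 a3 hab with rfl | rfl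
        · exact a4 hx
        · exact a4 (hyu.2 (hxu.1 hx))
      have hbD' : b ∈ D' := by
        by_contra h
        exact hb ⟨hbD, hb1, hb2, h⟩
      exact a4 (hcl b hbD' a a1 a2 a3 hab.symm)
    · let F : Finset V := D' \ D
      have hF : ∀ a, a ∈ F ↔ (a ∈ D' ∧ a ∉ D) := by intro a; simp [F]
      obtain ⟨a, ha, b, hb, hb1, hb2, hab⟩ := Q.good.sep w1 w2 F
        ⟨z, (hF z).2 ⟨hz, hzD⟩⟩ (by simp [hF, hD'.dw1]) (by simp [hF, hD'.dw2])
        ⟨x, by simp [hF, hx], Q.xw1, Q.xw2⟩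
      rw [hF] at ha hb
      have h1 : a ≠ w1 := fun h => hD'.dw1 (h ▸ ha.1)
      have h2 : a ≠ w2 := fun h => hD'.dw2 (h ▸ ha.1)
      have hbD : b ∉ D := by
        intro h
        rcases hDout a b ha.2 h h1 h2 hab with rfl | rfl
        · exact hx ha.1
        · exact hx (hxu.2 (hyu.1 ha.1))
      exact hb ⟨hcl a ha.1 b hbD hb1 hb2 hab, hbD⟩
  have h1 := hM _ _ _ _ _ _ _ _ _ _ _ hD'
  have h2 : D' ⊂ D := by
    refine hsub.ssubset_of_ne ?_
    rintro rfl
    exact hD'.dx hp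
  have := Finset.card_lt_card h2
  omega

end


section
variable [Fintype V] {G : SimpleGraph V} {k : ℕ}
variable {x y w1 w2 u v : V} {α γ : V → Fin k} {e f : Fin k} {D : Finset V}

/-- a globally minimal configuration -/
structure MQ (G : SimpleGraph V) (k : ℕ) (x y w1 w2 u v : V) (α γ : V → Fin k) (e f : Fin k)
    (D : Finset V) : Prop where
  Q : Quad G k x y w1 w2 u v α γ e f D
  M : Min G k D.card

theorem MQ.swapX (h : MQ G k x y w1 w2 u v α γ e f D) : MQ G k y x w1 w2 u v α γ e f D :=
  ⟨h.Q.swapX, h.M⟩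

theorem MQ.swapP (h : MQ G k x y w1 w2 u v α γ e f D) : MQ G k w1 w2 x y v u γ α f e D :=
  ⟨h.Q.swapP, h.M⟩

theorem MQ.loc (h : MQ G k x y w1 w2 u v α γ e f D) :
    ∀ F, F ⊂ D → ¬ Quad G k x y w1 w2 u v α γ e f F := by
  intro F hF hQ
  have := h.M _ _ _ _ _ _ _ _ _ _ _ hQ
  have := Finset.card_lt_card hF
  omega

theorem MQ.uD (h : MQ G k x y w1 w2 u v α γ e f D) : u ∉ D :=
  fun hh => h.Q.slack h.loc hh h.Q.ux h.Q.uy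

theorem MQ.slackX (h : MQ G k x y w1 w2 u v α γ e f D) {z : V} (hz : z ∈ D)
    (hzx : G.Adj z x) : ¬ G.Adj z y := fun hzy => h.Q.slack h.loc hz hzx hzy

/-- closed neighbourhood inside `D` -/
noncomputable def cn (G : SimpleGraph V) (D : Finset V) (z : V) : Finset V := insert z (nb G z ∩ D)

theorem mem_cn {z s : V} : s ∈ cn G D z ↔ s = z ∨ (G.Adj z s ∧ s ∈ D) := by
  simp [cn, mem_nb]

theorem MQ.inj (h : MQ G k x y w1 w2 u v α γ e f D) {z : V} (hz : z ∈ D) :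
    Set.InjOn α (cn G D z : Set V) := by
  intro s hs t ht hst
  by_contra hne
  rw [Finset.mem_coe, mem_cn] at hs ht
  rcases hs with rfl | hs <;> rcases ht with rfl | ht
  · exact hne rfl
  · exact h.Q.hα ht.1 hst
  · exact h.Q.hα hs.1 hst.symm
  · exact h.Q.rainbow h.M h.loc hz hs.2 ht.2 hne hs.1 ht.1 hst

theorem card_cn {z : V} : (cn G D z).card = (nb G z ∩ D).card + 1 := by
  rw [cn, Finset.card_insert_of_notMem]
  simp [mem_nb]

theorem MQ.cardX (h : MQ G k x y w1 w2 u v α γ e f D) {z : V} (hz : z ∈ D) :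
    (nb G z ∩ {x, y}).card = if G.Adj z x ∨ G.Adj z y then 1 else 0 := by
  by_cases hx : G.Adj z x
  · have hy := h.slackX hz hx
    have : nb G z ∩ {x, y} = {x} := by
      ext s
      simp only [Finset.mem_inter, mem_nb, Finset.mem_insert, Finset.mem_singleton]
      constructor
      · rintro ⟨h1, rfl | rfl⟩
        · rfl
        · exact absurd h1 hy
      · rintro rfl
        exact ⟨hx, Or.inl rfl⟩
    simp [this, hx]
  · by_cases hy : G.Adj z y
    · have : nb G z ∩ {x, y} = {y} := by
        ext s
        simp only [Finset.mem_inter, mem_nb, Finset.mem_insert, Finset.mem_singleton]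
        constructor
        · rintro ⟨h1, rfl | rfl⟩
          · exact absurd h1 hx
          · rfl
        · rintro rfl
          exact ⟨hy, Or.inr rfl⟩
      simp [this, hy]
    · have : nb G z ∩ {x, y} = ∅ := by
        ext s
        simp only [Finset.mem_inter, mem_nb, Finset.mem_insert, Finset.mem_singleton,
          Finset.notMem_empty, iff_false]
        rintro ⟨h1, rfl | rfl⟩
        · exact absurd h1 hx
        · exact absurd h1 hy
      simp [this, hx, hy]

theorem MQ.deg (h : MQ G k x y w1 w2 u v α γ e f D) {z : V} (hz : z ∈ D) :
    (nb G z ∩ D).card + (if G.Adj z x ∨ G.Adj z y then 1 else 0) +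
      (if G.Adj z w1 ∨ G.Adj z w2 then 1 else 0) = k := by
  have Q := h.Q
  rw [← h.cardX hz, ← h.swapP.cardX hz, ← h.Q.good.reg z, ← Finset.card_union_of_disjoint,
    ← Finset.card_union_of_disjoint]
  · congr 1
    ext s
    have := h.Q.closed z hz s
    simp only [Finset.mem_union, Finset.mem_inter, mem_nb, Finset.mem_insert, Finset.mem_singleton]
    tauto
  · rw [Finset.disjoint_left]
    intro s
    simp only [Finset.mem_union, Finset.mem_inter, mem_nb, Finset.mem_insert, Finset.mem_singleton]
    rintro (h1 | ⟨_, rfl | rfl⟩) ⟨_, rfl | rfl⟩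
    · exact Q.dw1 h1.2
    · exact Q.dw2 h1.2
    · exact Q.xw1 rfl
    · exact Q.xw2 rfl
    · exact Q.yw1 rfl
    · exact Q.yw2 rfl
  · rw [Finset.disjoint_left]
    intro s
    simp only [Finset.mem_inter, mem_nb, Finset.mem_insert, Finset.mem_singleton]
    rintro h1 ⟨_, rfl | rfl⟩
    · exact Q.dx h1.2
    · exact Q.dy h1.2

theorem MQ.card_cn_le (h : MQ G k x y w1 w2 u v α γ e f D) {z : V} (hz : z ∈ D) :
    (cn G D z).card ≤ k := by
  rw [← Finset.card_image_of_injOn (h.inj hz)]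
  exact (Finset.card_le_univ _).trans (by simp)

theorem MQ.cover (h : MQ G k x y w1 w2 u v α γ e f D) {z : V} (hz : z ∈ D) :
    (G.Adj z x ∨ G.Adj z y) ∨ (G.Adj z w1 ∨ G.Adj z w2) := by
  by_contra hcon
  rw [not_or] at hcon
  have h1 := h.deg hz
  have h2 := h.card_cn_le hz
  rw [card_cn] at h2
  rw [if_neg hcon.1, if_neg hcon.2] at h1
  omega

theorem MQ.allcol (h : MQ G k x y w1 w2 u v α γ e f D) {z : V} (hz : z ∈ D)
    (hc : k ≤ (cn G D z).card) (a : Fin k) : ∃ s ∈ cn G D z, α s = a := by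
  have h1 := Finset.card_image_of_injOn (h.inj hz)
  have h2 : (cn G D z).image α = Finset.univ := by
    apply Finset.eq_univ_of_card
    rw [h1, Fintype.card_fin]
    exact le_antisymm (h.card_cn_le hz) hc
  have h3 : a ∈ (cn G D z).image α := by simp [h2]
  simpa using h3

theorem MQ.xcol (h : MQ G k x y w1 w2 u v α γ e f D) {z : V}
    (hX : G.Adj z x ∨ G.Adj z y) : α z ≠ α x := by
  rcases hX with hX | hX
  · exact h.Q.hα hX
  · rw [h.Q.hαx]; exact h.Q.hα hX

theorem MQ.allbut (h : MQ G k x y w1 w2 u v α γ e f D) {z : V} (hz : z ∈ D)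
    (hc : k ≤ (cn G D z).card + 1) (hX : ∀ s ∈ cn G D z, G.Adj s x ∨ G.Adj s y) (a : Fin k)
    (ha : a ≠ α x) : ∃ s ∈ cn G D z, α s = a := by
  have h1 := Finset.card_image_of_injOn (h.inj hz)
  have h2 : (cn G D z).image α = Finset.univ.erase (α x) := by
    apply Finset.eq_of_subset_of_card_le
    · intro b hb
      rw [Finset.mem_image] at hb
      obtain ⟨s, hs, rfl⟩ := hb
      simp [h.xcol (hX s hs)]
    · rw [h1, Finset.card_erase_of_mem (Finset.mem_univ _)]
      simp
      omega
  have h3 : a ∈ (cn G D z).image α := by simp [h2, ha]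
  simpa using h3

theorem MQ.disj (h : MQ G k x y w1 w2 u v α γ e f D) {p q : V} (hp : p ∈ D) (hq : q ∈ D)
    (hpq : p ≠ q) (hc : α p = α q) : (cn G D p).card + (cn G D q).card ≤ D.card := by
  rw [← Finset.card_union_of_disjoint]
  · apply Finset.card_le_card
    intro s
    rw [Finset.mem_union, mem_cn, mem_cn]
    rintro ((rfl | h) | (rfl | h))
    · exact hp
    · exact h.2
    · exact hq
    · exact h.2
  · rw [Finset.disjoint_left]
    intro s
    rw [mem_cn, mem_cn]
    rintro (rfl | h1) (rfl | h2)
    · exact hpq rfl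
    · exact h.Q.hα h2.1 hc.symm
    · exact h.Q.hα h1.1 hc
    · exact h.Q.rainbow h.M h.loc h1.2 hp hq hpq h1.1.symm h2.1.symm hc

theorem MQ.card_nx (h : MQ G k x y w1 w2 u v α γ e f D) : (nb G x ∩ D).card + 1 ≤ k := by
  have : insert u (nb G x ∩ D) ⊆ nb G x := by
    intro s
    simp only [Finset.mem_insert, Finset.mem_inter, mem_nb]
    rintro (rfl | h')
    · exact h.Q.ux.symm
    · exact h'.1
  have := Finset.card_le_card this
  rw [Finset.card_insert_of_notMem (by simp [h.uD]), h.Q.good.reg] at this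
  exact this

theorem MQ.eq_nx (h : MQ G k x y w1 w2 u v α γ e f D) (hc : (nb G x ∩ D).card + 1 = k) {s : V}
    (hs : G.Adj x s) : s = u ∨ s ∈ D := by
  have h1 : insert u (nb G x ∩ D) ⊆ nb G x := by
    intro s
    simp only [Finset.mem_insert, Finset.mem_inter, mem_nb]
    rintro (rfl | h')
    · exact h.Q.ux.symm
    · exact h'.1
  have h2 : insert u (nb G x ∩ D) = nb G x := by
    apply Finset.eq_of_subset_of_card_le h1
    rw [Finset.card_insert_of_notMem (by simp [h.uD]), h.Q.good.reg]
    omega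
  have h3 : s ∈ insert u (nb G x ∩ D) := by rw [h2, mem_nb]; exact hs
  simp only [Finset.mem_insert, Finset.mem_inter, mem_nb] at h3
  tauto

theorem MQ.count4 (h : MQ G k x y w1 w2 u v α γ e f D) :
    (nb G x ∩ D).card + (nb G y ∩ D).card + (nb G w1 ∩ D).card + (nb G w2 ∩ D).card + 5 ≤ 4 * k := by
  have Q := h.Q
  have hk := Q.good.hk
  have a1 := h.card_nx
  have a2 := h.swapX.card_nx
  have a3 := h.swapP.card_nx
  have a4 := h.swapP.swapX.card_nx
  by_contra hcon
  have b1 := fun s => h.eq_nx (s := s) (by omega)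
  have b2 := fun s => h.swapX.eq_nx (s := s) (by omega)
  have b3 := fun s => h.swapP.eq_nx (s := s) (by omega)
  have b4 := fun s => h.swapP.swapX.eq_nx (s := s) (by omega)
  have huD := h.uD
  have hvD := h.swapP.uD
  let F : Finset V := D ∪ {x, y, w1, w2}
  have hF : ∀ a, a ∈ F ↔ (a ∈ D ∨ a = x ∨ a = y ∨ a = w1 ∨ a = w2) := by
    intro a; simp [F]; tauto
  have hcl : ∀ a ∈ F, ∀ b, G.Adj a b → b ∈ F ∨ b = u ∨ b = v := by
    intro a ha b hab
    rw [hF] at ha ⊢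
    rcases ha with ha | rfl | rfl | rfl | rfl
    · have := Q.closed a ha b hab
      tauto
    · have := b1 b hab
      tauto
    · have := b2 b hab
      tauto
    · have := b3 b hab
      tauto
    · have := b4 b hab
      tauto
  have hu : u ∉ F := by
    rw [hF]
    rintro (h | h | h | h | h)
    · exact huD h
    · exact Q.ux.ne h
    · exact Q.uy.ne h
    · exact Q.uw1 h
    · exact Q.uw2 h
  have hv : v ∉ F := by
    rw [hF]
    rintro (h | h | h | h | h)
    · exact hvD h
    · exact Q.vx h
    · exact Q.vy h
    · exact Q.vw1.ne h
    · exact Q.vw2.ne h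
  by_cases hz : ∃ z, z ∉ F ∧ z ≠ u ∧ z ≠ v
  · obtain ⟨a, ha, b, hb, hbu, hbv, hab⟩ := Q.good.sep u v F ⟨x, by simp [hF]⟩ hu hv hz
    rcases hcl a ha b hab with h | h | h
    · exact hb h
    · exact hbu h
    · exact hbv h
  · push Not at hz
    have : nb G u ⊆ {x, y, v} := by
      intro s hs
      rw [mem_nb] at hs
      simp only [Finset.mem_insert, Finset.mem_singleton]
      by_cases hsF : s ∈ F
      · rw [hF] at hsF
        rcases hsF with h | h | h | rfl | rfl
        · have h5 := Q.closed s h u hs.symm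
          rw [← hF] at h5
          exact absurd h5 hu
        · exact Or.inl h
        · exact Or.inr (Or.inl h)
        · rcases b3 u hs.symm with h | h
          · exact absurd h Q.uv
          · exact absurd h huD
        · rcases b4 u hs.symm with h | h
          · exact absurd h Q.uv
          · exact absurd h huD
      · exact Or.inr (Or.inr (hz s hsF hs.ne'))
    have h1 := Finset.card_le_card this
    have h2 : ({x, y, v} : Finset V).card ≤ 3 := Finset.card_le_three
    rw [Q.good.reg] at h1
    omega

/-- the vertices of `D` adjacent to one of `x`, `y` -/
noncomputable def DX (G : SimpleGraph V) (D : Finset V) (x y : V) : Finset V :=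
  D.filter (fun z => G.Adj z x ∨ G.Adj z y)

theorem mem_DX {z : V} : z ∈ DX G D x y ↔ z ∈ D ∧ (G.Adj z x ∨ G.Adj z y) := by
  simp [DX]

theorem MQ.cardDX (h : MQ G k x y w1 w2 u v α γ e f D) :
    (DX G D x y).card = (nb G x ∩ D).card + (nb G y ∩ D).card := by
  rw [← Finset.card_union_of_disjoint]
  · congr 1
    ext s
    simp only [mem_DX, Finset.mem_union, Finset.mem_inter, mem_nb, G.adj_comm s x, G.adj_comm s y]
    tauto
  · rw [Finset.disjoint_left]
    intro s
    simp only [Finset.mem_inter, mem_nb]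
    intro h1 h2
    exact h.slackX h1.2 h1.1.symm h2.1.symm

theorem MQ.count (h : MQ G k x y w1 w2 u v α γ e f D) :
    D.card + (DX G D x y ∩ DX G D w1 w2).card + 5 ≤ 4 * k := by
  have h1 := h.cardDX
  have h2 := h.swapP.cardDX
  have h3 := Finset.card_union_add_card_inter (DX G D x y) (DX G D w1 w2)
  have h4 : DX G D x y ∪ DX G D w1 w2 = D := by
    ext s
    rw [Finset.mem_union, mem_DX, mem_DX]
    constructor
    · rintro (h | h) <;> exact h.1
    · intro hs
      have := h.cover hs
      tauto
  rw [h4] at h3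
  have := h.count4
  omega

/-- an only-X vertex has an only-W neighbour coloured as `x` -/
theorem MQ.onlyX (h : MQ G k x y w1 w2 u v α γ e f D) {t : V} (ht : t ∈ D)
    (hX : G.Adj t x ∨ G.Adj t y) (hW : ¬ (G.Adj t w1 ∨ G.Adj t w2)) :
    ∃ p ∈ D, G.Adj t p ∧ α p = α x := by
  have h1 := h.deg ht
  rw [if_pos hX, if_neg hW] at h1
  obtain ⟨p, hp, hpa⟩ := h.allcol ht (by rw [card_cn]; omega) (α x)
  rw [mem_cn] at hp
  rcases hp with rfl | hp
  · exact absurd hpa (h.xcol hX)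
  · exact ⟨p, hp.2, hp.1, hpa⟩

theorem MQ.cut (h : MQ G k x y w1 w2 u v α γ e f D) {t : V} (ht : t ∈ D)
    (hX : G.Adj t x ∨ G.Adj t y) (hW : ¬ (G.Adj t w1 ∨ G.Adj t w2)) :
    ∃ F ⊆ D.erase t, F.Nonempty ∧ F ≠ D.erase t ∧
      ∀ a ∈ F, ∀ b ∈ D.erase t, b ∉ F → ¬ G.Adj a b := by
  by_contra hcon
  push Not at hcon
  have Q := h.Q
  obtain ⟨p, hp, htp, hpc⟩ := h.onlyX ht hX hW
  have hpX : ¬ (G.Adj p x ∨ G.Adj p y) := fun hh => h.xcol hh hpc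
  have hpW : G.Adj p w1 ∨ G.Adj p w2 := (h.cover hp).resolve_left hpX
  have htx : t ≠ x := fun hh => Q.dx (hh ▸ ht)
  have hty : t ≠ y := fun hh => Q.dy (hh ▸ ht)
  refine Q.extend {t} (base x y e f) (by simp [base]) (by simp [base])
    (by simp [base, Q.xw1.symm, Q.yw1.symm]) (by simp [base, Q.xw2.symm, Q.yw2.symm]) ?_ ?_
  · intro z hz _ s hs hzs
    rw [Finset.mem_singleton] at hz
    subst hz
    have h1 : s = x ∨ s = y := by
      rcases Q.closed z ht s hzs with h | h | h | rfl | rfl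
      · exfalso
        apply hs
        simp [h, hzs.ne']
      · exact Or.inl h
      · exact Or.inr h
      · exact absurd (Or.inl hzs) hW
      · exact absurd (Or.inr hzs) hW
    simp only [base, h1, htx, hty, or_self, if_true, if_false]
    exact Q.ef.symm
  · intro B hB T hT hne hd
    rw [← Finset.erase_eq] at hT
    by_cases hTD : T = D.erase t
    · have hpT : p ∈ T := by rw [hTD]; simp [hp, htp.ne']
      rcases hpW with hw | hw
      · exact ⟨p, hpT, slack2 Q.good hd htp.symm hw (by simp [hB]) (by simp [hB])
          (fun hh => Q.dw1 (hh ▸ ht)) (by simp [base, htx, hty, Q.xw1.symm, Q.yw1.symm])⟩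
      · exact ⟨p, hpT, slack2 Q.good hd htp.symm hw (by simp [hB]) (by simp [hB])
          (fun hh => Q.dw2 (hh ▸ ht)) (by simp [base, htx, hty, Q.xw2.symm, Q.yw2.symm])⟩
    · obtain ⟨a, ha, b, hb, hbT, hab⟩ := hcon T hT hne hTD
      refine ⟨a, ha, slack1 Q.good hd hab hbT ?_⟩
      rw [Finset.mem_erase] at hb
      rw [hB]
      rintro (rfl | rfl | rfl | rfl | h)
      · exact Q.dx hb.2
      · exact Q.dy hb.2
      · exact Q.dw1 hb.2
      · exact Q.dw2 hb.2
      · exact hb.1 (by simpa using h)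

/-- vertices of only one type -/
def Single (G : SimpleGraph V) (x y w1 w2 t : V) : Prop :=
  ¬ ((G.Adj t x ∨ G.Adj t y) ∧ (G.Adj t w1 ∨ G.Adj t w2))

theorem MQ.cut' (h : MQ G k x y w1 w2 u v α γ e f D) {t : V} (ht : t ∈ D)
    (hs : Single G x y w1 w2 t) : ∃ F ⊆ D.erase t, F.Nonempty ∧ F ≠ D.erase t ∧
      ∀ a ∈ F, ∀ b ∈ D.erase t, b ∉ F → ¬ G.Adj a b := by
  rcases h.cover ht with h1 | h1
  · exact h.cut ht h1 (fun h2 => hs ⟨h1, h2⟩)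
  · exact h.swapP.cut ht h1 (fun h2 => hs ⟨h2, h1⟩)

theorem MQ.big (h : MQ G k x y w1 w2 u v α γ e f D) : ∀ (n : ℕ) (F : Finset V) (t : V),
    F.card = n → t ∈ D → F ⊆ D.erase t → F.Nonempty →
    (∀ a ∈ F, ∀ b ∈ D.erase t, b ∉ F → ¬ G.Adj a b) →
    k ≤ (F ∩ (DX G D x y ∩ DX G D w1 w2)).card + 2 := by
  intro n
  induction n using Nat.strong_induction_on with
  | _ n ih =>
  intro F t hn ht hF hne hcl
  have htF : t ∉ F := fun hh => (Finset.mem_erase.1 (hF hh)).1 rfl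
  have hFD : F ⊆ D := hF.trans (Finset.erase_subset _ _)
  by_cases hs : ∃ t' ∈ F, Single G x y w1 w2 t'
  · obtain ⟨t', ht', hs'⟩ := hs
    have ht'D := hFD ht'
    have htt : t ≠ t' := fun hh => htF (hh ▸ ht')
    obtain ⟨F1, h1, h2, h3, h4⟩ : ∃ F1 ⊆ D.erase t', F1.Nonempty ∧ t ∉ F1 ∧
      ∀ a ∈ F1, ∀ b ∈ D.erase t', b ∉ F1 → ¬ G.Adj a b := by
      obtain ⟨F1, h1, h2, h3, h4⟩ := h.cut' ht'D hs'
      by_cases h5 : t ∈ F1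
      · refine ⟨D.erase t' \ F1, Finset.sdiff_subset, ?_, by simp [h5], ?_⟩
        · rw [Finset.sdiff_nonempty]
          intro h6
          exact h3 (Finset.Subset.antisymm h1 h6)
        · intro a ha b hb hbF hab
          rw [Finset.mem_sdiff] at ha
          have : b ∈ F1 := by
            by_contra h6
            exact hbF (Finset.mem_sdiff.2 ⟨hb, h6⟩)
          exact h4 b this a ha.1 ha.2 hab.symm
      · exact ⟨F1, h1, h2, h5, h4⟩
    have hsub : F1 ⊆ F := by
      by_contra hns
      rw [← Finset.sdiff_nonempty] at hns
      obtain ⟨a, ha, b, hb, hbK, hab⟩ := h.Q.conn h.loc (F1 \ F)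
        (Finset.sdiff_subset.trans (h1.trans (Finset.erase_subset _ _))) hns (by
          intro hh
          rw [← hh, Finset.mem_sdiff] at ht
          exact h3 ht.1)
      rw [Finset.mem_sdiff] at ha hbK
      have haD := Finset.mem_of_mem_erase (h1 ha.1)
      have hat : a ≠ t := fun hh => h3 (hh ▸ ha.1)
      by_cases hbF : b ∈ F
      · exact hcl b hbF a (Finset.mem_erase.2 ⟨hat, haD⟩) ha.2 hab.symm
      · have hbF1 : b ∉ F1 := fun hh => hbK ⟨hh, hbF⟩
        have hbt' : b ≠ t' := fun hh => hbF (hh ▸ ht')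
        exact h4 a ha.1 b (Finset.mem_erase.2 ⟨hbt', hb⟩) hbF1 hab
    have hss : F1 ⊂ F := hsub.ssubset_of_ne (by
      rintro rfl
      exact (Finset.mem_erase.1 (h1 ht')).1 rfl)
    have h5 := ih _ (hn ▸ Finset.card_lt_card hss) F1 t' rfl ht'D h1 h2 h4
    have h6 : (F1 ∩ (DX G D x y ∩ DX G D w1 w2)).card ≤ _ :=
      Finset.card_le_card (Finset.inter_subset_inter_right hsub)
    omega
  · push Not at hs
    have hdd : ∀ q ∈ F, (G.Adj q x ∨ G.Adj q y) ∧ (G.Adj q w1 ∨ G.Adj q w2) := by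
      intro q hq
      have := hs q hq
      unfold Single at this
      tauto
    have heq : F ∩ (DX G D x y ∩ DX G D w1 w2) = F := by
      rw [Finset.inter_eq_left]
      intro q hq
      rw [Finset.mem_inter, mem_DX, mem_DX]
      have := hdd q hq
      have := hFD hq
      tauto
    rw [heq]
    obtain ⟨q, hq⟩ := hne
    have h1 := h.deg (hFD hq)
    rw [if_pos (hdd q hq).1, if_pos (hdd q hq).2] at h1
    have h2 : cn G D q ⊆ insert t F := by
      intro s hs
      rw [mem_cn] at hs
      rw [Finset.mem_insert]
      rcases hs with rfl | hs
      · exact Or.inr hq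
      · by_contra hcon
        rw [not_or] at hcon
        exact hcl q hq s (Finset.mem_erase.2 ⟨hcon.1, hs.2⟩) hcon.2 hs.1
    have h3 := Finset.card_le_card h2
    rw [card_cn, Finset.card_insert_of_notMem htF] at h3
    omega

theorem MQ.small (h : MQ G k x y w1 w2 u v α γ e f D) {t : V} (ht : t ∈ D)
    (hs : Single G x y w1 w2 t) : D.card + 1 ≤ 2 * k := by
  obtain ⟨F, h1, h2, h3, h4⟩ := h.cut' ht hs
  have a1 := h.big _ F t rfl ht h1 h2 h4
  have a2 := h.big _ (D.erase t \ F) t rfl ht Finset.sdiff_subset (by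
    rw [Finset.sdiff_nonempty]
    intro h6
    exact h3 (Finset.Subset.antisymm h1 h6)) (by
    intro a ha b hb hbF hab
    rw [Finset.mem_sdiff] at ha
    have : b ∈ F := by
      by_contra h6
      exact hbF (Finset.mem_sdiff.2 ⟨hb, h6⟩)
    exact h4 b this a ha.1 ha.2 hab.symm)
  have a3 := h.count
  have a4 : (F ∩ (DX G D x y ∩ DX G D w1 w2)).card +
      ((D.erase t \ F) ∩ (DX G D x y ∩ DX G D w1 w2)).card ≤ (DX G D x y ∩ DX G D w1 w2).card := by
    rw [← Finset.card_union_of_disjoint]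
    · apply Finset.card_le_card
      exact Finset.union_subset Finset.inter_subset_right Finset.inter_subset_right
    · exact (Finset.disjoint_sdiff).mono Finset.inter_subset_left Finset.inter_subset_left
  omega

/-- with a single-type vertex present: a unique vertex coloured as `x`, dominating the single ones -/
theorem MQ.pole (h : MQ G k x y w1 w2 u v α γ e f D) {t : V} (ht : t ∈ D)
    (hs : Single G x y w1 w2 t) : ∃ p ∈ D, ¬ (G.Adj p x ∨ G.Adj p y) ∧
      ∀ s ∈ D, Single G x y w1 w2 s → s = p ∨ G.Adj s p := by
  have hsm := h.small ht hs
  have hk := h.Q.good.hk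
  have hfull : ∀ s ∈ D, Single G x y w1 w2 s → k ≤ (cn G D s).card := by
    intro s hs hss
    have h1 := h.deg hs
    rw [card_cn]
    unfold Single at hss
    by_cases hX : G.Adj s x ∨ G.Adj s y
    · rw [if_pos hX, if_neg (fun hW => hss ⟨hX, hW⟩)] at h1
      omega
    · rw [if_neg hX] at h1
      split_ifs at h1 <;> omega
  have hex : ∀ s ∈ D, Single G x y w1 w2 s → ∃ p ∈ D, α p = α x ∧ (s = p ∨ G.Adj s p) := by
    intro s hs hss
    obtain ⟨p, hp, hpc⟩ := h.allcol hs (hfull s hs hss) (α x)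
    rw [mem_cn] at hp
    rcases hp with rfl | hp
    · exact ⟨p, hs, hpc, Or.inl rfl⟩
    · exact ⟨p, hp.2, hpc, Or.inr hp.1⟩
  obtain ⟨p, hp, hpc, -⟩ := hex t ht hs
  have hno : ∀ q, α q = α x → ¬ (G.Adj q x ∨ G.Adj q y) := fun q hq hX => h.xcol hX hq
  refine ⟨p, hp, hno p hpc, ?_⟩
  intro s hs hss
  obtain ⟨q, hq, hqc, hsq⟩ := hex s hs hss
  have : q = p := by
    by_contra hne
    have h1 := h.disj hq hp hne (hqc.trans hpc.symm)
    have h2 := hfull q hq (fun hh => hno q hqc hh.1)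
    have h3 := hfull p hp (fun hh => hno p hpc hh.1)
    omega
  rwa [this] at hsq

theorem single_symm {t : V} (h : Single G x y w1 w2 t) : Single G w1 w2 x y t :=
  fun hh => h ⟨hh.2, hh.1⟩

theorem MQ.double (h : MQ G k x y w1 w2 u v α γ e f D) {t : V} (ht : t ∈ D) :
    (G.Adj t x ∨ G.Adj t y) ∧ (G.Adj t w1 ∨ G.Adj t w2) := by
  by_contra hs
  have Q := h.Q
  obtain ⟨p, hp, hpX, hpd⟩ := h.pole ht hs
  obtain ⟨q, hq, hqW, hqd⟩ := h.swapP.pole ht (single_symm hs)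
  have hpW := (h.cover hp).resolve_left hpX
  have hqX := (h.cover hq).resolve_right hqW
  have hqs : Single G x y w1 w2 q := fun hh => hqW hh.2
  have hqp : G.Adj q p := by
    rcases hpd q hq hqs with rfl | h1
    · exact absurd hqX hpX
    · exact h1
  have neD : ∀ {a b : V}, a ∈ D → b ∉ D → a ≠ b := fun ha hb h => hb (h ▸ ha)
  let c0 : V → Fin k := Function.update (base x y e f) p e
  have cp : c0 p = e := by simp [c0]
  have cx : c0 x = e := by simp [c0, base, (neD hp Q.dx).symm]
  have cy : c0 y = e := by simp [c0, base, (neD hp Q.dy).symm]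
  have cw1 : c0 w1 = f := by simp [c0, base, (neD hp Q.dw1).symm, Q.xw1.symm, Q.yw1.symm]
  have cw2 : c0 w2 = f := by simp [c0, base, (neD hp Q.dw2).symm, Q.xw2.symm, Q.yw2.symm]
  have cq : c0 q = f := by simp [c0, base, hqp.ne, neD hq Q.dx, neD hq Q.dy]
  refine Q.extend {p, q} c0 cx cy cw1 cw2 ?_ ?_
  · intro z hz hzD s hs hzs
    simp only [Finset.mem_insert, Finset.mem_singleton] at hz
    have hs' : s ∈ D → s = p ∨ s = q := by
      intro h1
      by_contra h2
      apply hs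
      simp only [Finset.mem_sdiff, Finset.mem_insert, Finset.mem_singleton]
      exact ⟨h1, h2⟩
    rcases hz with rfl | rfl
    · have : c0 s = f := by
        rcases Q.closed z hp s hzs with h1 | rfl | rfl | rfl | rfl
        · rcases hs' h1 with rfl | rfl
          · exact absurd rfl hzs.ne
          · exact cq
        · exact absurd (Or.inl hzs) hpX
        · exact absurd (Or.inr hzs) hpX
        · exact cw1
        · exact cw2
      rw [cp, this]; exact Q.ef
    · have : c0 s = e := by
        rcases Q.closed z hq s hzs with h1 | rfl | rfl | rfl | rfl
        · rcases hs' h1 with rfl | rfl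
          · exact cp
          · exact absurd rfl hzs.ne
        · exact cx
        · exact cy
        · exact absurd (Or.inl hzs) hqW
        · exact absurd (Or.inr hzs) hqW
      rw [cq, this]; exact Q.ef.symm
  · intro B hB T hT hne hd
    have hTD : T ⊆ D := hT.trans Finset.sdiff_subset
    have hTp : p ∉ T := fun hh => by have := hT hh; simp at this
    have hTq : q ∉ T := fun hh => by have := hT hh; simp at this
    obtain ⟨a, ha, b, hb, hbT, hab⟩ := Q.conn h.loc T hTD hne (fun hh => hTp (hh ▸ hp))
    refine ⟨a, ha, ?_⟩
    have haD := hTD ha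
    have hpB : p ∈ B := by simp [hB]
    have hqB : q ∈ B := by simp [hB]
    have sX : G.Adj a p → (G.Adj a x ∨ G.Adj a y) →
        ((nb G a ∩ B).image c0).card + (nb G a ∩ T).card < k := by
      rintro h1 (h2 | h2)
      · exact slack2 Q.good hd h1 h2 hpB (by simp [hB]) (neD hp Q.dx) (cp.trans cx.symm)
      · exact slack2 Q.good hd h1 h2 hpB (by simp [hB]) (neD hp Q.dy) (cp.trans cy.symm)
    have sW : G.Adj a q → (G.Adj a w1 ∨ G.Adj a w2) →
        ((nb G a ∩ B).image c0).card + (nb G a ∩ T).card < k := by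
      rintro h1 (h2 | h2)
      · exact slack2 Q.good hd h1 h2 hqB (by simp [hB]) (neD hq Q.dw1) (cq.trans cw1.symm)
      · exact slack2 Q.good hd h1 h2 hqB (by simp [hB]) (neD hq Q.dw2) (cq.trans cw2.symm)
    by_cases hbB : b ∈ B
    · rw [hB] at hbB
      by_cases hsing : Single G x y w1 w2 a
      · have e1 := (hpd a haD hsing).resolve_left (fun hh => hTp (hh ▸ ha))
        have e2 := (hqd a haD (single_symm hsing)).resolve_left (fun hh => hTq (hh ▸ ha))
        rcases h.cover haD with h1 | h1
        · exact sX e1 h1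
        · exact sW e2 h1
      · unfold Single at hsing
        rw [not_not] at hsing
        rcases hbB with rfl | rfl | rfl | rfl | h1
        · exact absurd hb Q.dx
        · exact absurd hb Q.dy
        · exact absurd hb Q.dw1
        · exact absurd hb Q.dw2
        · simp only [Finset.mem_insert, Finset.mem_singleton] at h1
          rcases h1 with rfl | rfl
          · exact sX hab hsing.1
          · exact sW hab hsing.2
    · exact slack1 Q.good hd hab hbT hbB

theorem MQ.cn_eq (h : MQ G k x y w1 w2 u v α γ e f D) {t : V} (ht : t ∈ D) : cn G D t = D := by
  have hk := h.Q.good.hk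
  have hc : ∀ s ∈ D, (cn G D s).card + 1 = k := by
    intro s hs
    have h1 := h.deg hs
    rw [if_pos (h.double hs).1, if_pos (h.double hs).2] at h1
    rw [card_cn]
    omega
  have hsub : ∀ s ∈ D, cn G D s ⊆ D := by
    intro s hs r hr
    rw [mem_cn] at hr
    rcases hr with rfl | hr
    · exact hs
    · exact hr.2
  apply Finset.Subset.antisymm (hsub t ht)
  intro z hz
  by_contra hzt
  obtain ⟨p, hp, hpc⟩ := h.allbut hz (by have := hc z hz; omega)
    (fun s hs => (h.double (hsub z hz hs)).1) (α t) (h.xcol (h.double ht).1)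
  have hpt : p ≠ t := by
    rintro rfl
    apply hzt
    rw [mem_cn] at hp ⊢
    rcases hp with rfl | hp
    · exact Or.inl rfl
    · exact Or.inr ⟨hp.1.symm, hz⟩
  have h1 := h.disj (hsub z hz hp) ht hpt hpc
  have h2 := hc t ht
  have h3 := hc p (hsub z hz hp)
  have h4 := h.count
  have h5 : DX G D x y ∩ DX G D w1 w2 = D := by
    ext s
    rw [Finset.mem_inter, mem_DX, mem_DX]
    constructor
    · exact fun hh => hh.1.1
    · intro hs
      exact ⟨⟨hs, (h.double hs).1⟩, ⟨hs, (h.double hs).2⟩⟩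
  rw [h5] at h4
  omega

end


section
variable [Fintype V] {G : SimpleGraph V} {k : ℕ}

/-- colourings in the class of those alike on `p`, `q` -/
def Cls (G : SimpleGraph V) (k : ℕ) (p q : V) (c : V → Fin k) : Prop :=
  IsProperColoring G k c ∧ ∃ α, IsProperColoring G k α ∧ α p = α q ∧ KE G k α c

theorem cls_self {p q : V} {c : V → Fin k} (hc : IsProperColoring G k c) (h : c p = c q) :
    Cls G k p q c := ⟨hc, c, hc, h, Relation.ReflTransGen.refl⟩

theorem Cls.step {p q : V} {c c' : V → Fin k} (h : Cls G k p q c) (hs : Step G k c c') :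
    Cls G k p q c' := by
  obtain ⟨h1, α, h2, h3, h4⟩ := h
  exact ⟨hs.2.1, α, h2, h3, Relation.ReflTransGen.tail h4 hs⟩

theorem flip2 {c : V → Fin k} (hc : IsProperColoring G k c) {s t : V} (hst : s ≠ t)
    (h1 : ∀ r, r ≠ s → r ≠ t → G.Adj s r → c r ≠ c t)
    (h2 : ∀ r, r ≠ s → r ≠ t → G.Adj t r → c r ≠ c s) :
    ∃ c', Step G k c c' ∧ c' s = c t ∧ c' t = c s ∧ ∀ r, r ≠ s → r ≠ t → c' r = c r := by
  let c' : V → Fin k := Function.update (Function.update c s (c t)) t (c s)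
  have e1 : c' s = c t := by simp [c', hst]
  have e2 : c' t = c s := by simp [c']
  have e3 : ∀ r, r ≠ s → r ≠ t → c' r = c r := by
    intro r hs ht
    simp [c', hs, ht]
  refine ⟨c', ⟨hc, ?_, c s, c t, ?_⟩, e1, e2, e3⟩
  · intro a b hab
    by_cases as : a = s
    · subst as
      rw [e1]
      by_cases bt : b = t
      · subst bt
        rw [e2]; exact (hc hab).symm
      · rw [e3 b hab.ne' bt]
        exact (h1 b hab.ne' bt hab).symm
    · by_cases at' : a = t
      · subst at'
        rw [e2]
        by_cases bs : b = s
        · subst bs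
          rw [e1]; exact (hc hab).symm
        · rw [e3 b bs hab.ne']
          exact (h2 b bs hab.ne' hab).symm
      · rw [e3 a as at']
        by_cases bs : b = s
        · subst bs
          rw [e1]; exact h1 a as at' hab.symm
        · by_cases bt : b = t
          · subst bt
            rw [e2]; exact h2 a as at' hab.symm
          · rw [e3 b bs bt]; exact hc hab
  · intro r
    by_cases rs : r = s
    · subst rs; right; left; exact ⟨rfl, e1⟩
    · by_cases rt : r = t
      · subst rt; right; right; exact ⟨rfl, e2⟩
      · left; exact (e3 r rs rt).symm

theorem flip1 {c : V → Fin k} (hc : IsProperColoring G k c) {s : V} {a : Fin k}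
    (h1 : ∀ r, G.Adj s r → c r ≠ a) :
    ∃ c', Step G k c c' ∧ c' s = a ∧ ∀ r, r ≠ s → c' r = c r := by
  let c' : V → Fin k := Function.update c s a
  have e1 : c' s = a := by simp [c']
  have e3 : ∀ r, r ≠ s → c' r = c r := by
    intro r hs
    simp [c', hs]
  refine ⟨c', ⟨hc, ?_, c s, a, ?_⟩, e1, e3⟩
  · intro p q hpq
    by_cases ps : p = s
    · subst ps
      rw [e1, e3 q hpq.ne']
      exact (h1 q hpq).symm
    · rw [e3 p ps]
      by_cases qs : q = s
      · subst qs
        rw [e1]; exact h1 p hpq.symm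
      · rw [e3 q qs]; exact hc hpq
  · intro r
    by_cases rs : r = s
    · subst rs; right; left; exact ⟨rfl, e1⟩
    · left; exact (e3 r rs).symm

/-- the final configuration: `D` is a clique -/
structure Cl (G : SimpleGraph V) (k : ℕ) (x y w1 w2 u v : V) (D : Finset V) : Prop where
  good : Good G k
  xy : x ≠ y
  ww : w1 ≠ w2
  xw1 : x ≠ w1
  xw2 : x ≠ w2
  yw1 : y ≠ w1
  yw2 : y ≠ w2
  ux : G.Adj u x
  uy : G.Adj u y
  vw1 : G.Adj v w1
  vw2 : G.Adj v w2
  dx : x ∉ D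
  dy : y ∉ D
  dw1 : w1 ∉ D
  dw2 : w2 ∉ D
  closed : ∀ z ∈ D, ∀ t, G.Adj z t → t ∈ D ∨ t = x ∨ t = y ∨ t = w1 ∨ t = w2
  cardD : D.card + 1 = k
  clq : ∀ s ∈ D, ∀ t ∈ D, s ≠ t → G.Adj s t
  X1 : ∀ z ∈ D, G.Adj z x ∨ G.Adj z y
  X2 : ∀ z ∈ D, G.Adj z x → ¬ G.Adj z y
  W1 : ∀ z ∈ D, G.Adj z w1 ∨ G.Adj z w2
  W2 : ∀ z ∈ D, G.Adj z w1 → ¬ G.Adj z w2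
  hno : ∀ α γ : V → Fin k, IsProperColoring G k α → IsProperColoring G k γ → α x = α y →
    γ w1 = γ w2 → ¬ KE G k α γ

variable {x y w1 w2 u v : V} {D : Finset V}

theorem Cl.swapX (h : Cl G k x y w1 w2 u v D) : Cl G k y x w1 w2 u v D := by
  refine ⟨h.good, h.xy.symm, h.ww, h.yw1, h.yw2, h.xw1, h.xw2, h.uy, h.ux, h.vw1, h.vw2, h.dy, h.dx,
    h.dw1, h.dw2, ?_, h.cardD, h.clq, ?_, ?_, h.W1, h.W2, ?_⟩
  · intro z hz t ht
    have := h.closed z hz t ht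
    tauto
  · intro z hz
    exact (h.X1 z hz).symm
  · intro z hz h1 h2
    exact h.X2 z hz h2 h1
  · intro α γ h1 h2 h3 h4
    exact h.hno α γ h1 h2 h3.symm h4

theorem Cl.swapP (h : Cl G k x y w1 w2 u v D) : Cl G k w1 w2 x y v u D := by
  refine ⟨h.good, h.ww, h.xy, h.xw1.symm, h.yw1.symm, h.xw2.symm, h.yw2.symm, h.vw1, h.vw2, h.ux,
    h.uy, h.dw1, h.dw2, h.dx, h.dy, ?_, h.cardD, h.clq, h.W1, h.W2, h.X1, h.X2, ?_⟩
  · intro z hz t ht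
    have := h.closed z hz t ht
    tauto
  · intro α γ h1 h2 h3 h4 h5
    exact h.hno γ α h2 h1 h4 h3 h5.symm

theorem Cl.swapW (h : Cl G k x y w1 w2 u v D) : Cl G k x y w2 w1 u v D :=
  h.swapP.swapX.swapP

variable {α γ : V → Fin k}

theorem Cl.link (h : Cl G k x y w1 w2 u v D) {c c' : V → Fin k} (hc : Cls G k x y c)
    (hc' : Cls G k w1 w2 c') {p q m : V} (hpq : p ≠ q) (hp : G.Adj m p) (hq : G.Adj m q)
    (e1 : c p = c q) (e2 : c' p = c' q) : False := by
  obtain ⟨h1, α, h2, h3, h4⟩ := hc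
  obtain ⟨g1, γ, g2, g3, g4⟩ := hc'
  exact h.hno α γ h2 g2 h3 g3 ((h4.trans (L1 h.good hpq hp hq h1 g1 e1 e2)).trans g4.symm)

theorem Cl.neD (h : Cl G k x y w1 w2 u v D) (hα : IsProperColoring G k α) (hx : α x = α y) {d : V}
    (hd : d ∈ D) : α d ≠ α x := by
  rcases h.X1 d hd with h1 | h1
  · exact hα h1
  · rw [hx]; exact hα h1

theorem Cl.injD (h : Cl G k x y w1 w2 u v D) (hα : IsProperColoring G k α) {d d' : V}
    (hd : d ∈ D) (hd' : d' ∈ D) (he : α d = α d') : d = d' := by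
  by_contra hne
  exact hα (h.clq d hd d' hd' hne) he

theorem Cl.colD (h : Cl G k x y w1 w2 u v D) (hα : IsProperColoring G k α) (hx : α x = α y)
    (c : Fin k) (hc : c ≠ α x) : ∃ d ∈ D, α d = c := by
  have h1 : (D.image α).card = D.card :=
    Finset.card_image_of_injOn (fun a ha b hb hab => h.injD hα ha hb hab)
  have h2 : D.image α = Finset.univ.erase (α x) := by
    apply Finset.eq_of_subset_of_card_le
    · intro b hb
      rw [Finset.mem_image] at hb
      obtain ⟨s, hs, rfl⟩ := hb
      simp [h.neD hα hx hs]
    · rw [h1, Finset.card_erase_of_mem (Finset.mem_univ _)]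
      have := h.cardD
      simp
      omega
  have h3 : c ∈ D.image α := by simp [h2, hc]
  simpa using h3

/-- swap the colours of two vertices of the clique -/
theorem Cl.swapD (h : Cl G k x y w1 w2 u v D) (hα : IsProperColoring G k α) {d d' : V}
    (hd : d ∈ D) (hd' : d' ∈ D) (hne : d ≠ d')
    (h1 : ∀ r, r ∉ D → G.Adj d r → α r ≠ α d') (h2 : ∀ r, r ∉ D → G.Adj d' r → α r ≠ α d) :
    ∃ α', IsProperColoring G k α' ∧ α' d = α d' ∧ α' d' = α d ∧ ∀ r, r ∉ D → α' r = α r := by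
  obtain ⟨c, a1, a2, a3, a4⟩ := flip2 hα hne (by
      intro r hr1 hr2 hr
      by_cases hrD : r ∈ D
      · exact fun hh => hr2 (h.injD hα hrD hd' hh)
      · exact h1 r hrD hr) (by
      intro r hr1 hr2 hr
      by_cases hrD : r ∈ D
      · exact fun hh => hr1 (h.injD hα hrD hd hh)
      · exact h2 r hrD hr)
  exact ⟨c, a1.2.1, a2, a3, fun r hr => a4 r (fun hh => hr (hh ▸ hd)) (fun hh => hr (hh ▸ hd'))⟩

theorem Cl.out (h : Cl G k x y w1 w2 u v D) {d r : V} (hd : d ∈ D) (hr : r ∉ D) (hdr : G.Adj d r) :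
    r = x ∨ r = y ∨ r = w1 ∨ r = w2 := (h.closed d hd r hdr).resolve_left hr

theorem Cl.C1 (h : Cl G k x y w1 w2 u v D) {c : V → Fin k} (hc : Cls G k x y c) {d a : V}
    (hd : d ∈ D) (hdy : G.Adj d y) (hdc : c d = c x) (ha : a ∈ D) (hax : G.Adj a x)
    (hγ : IsProperColoring G k γ) (hγw : γ w1 = γ w2) (hgx : γ x ≠ γ w1) : False := by
  have hdx : ¬ G.Adj d x := fun hh => h.X2 d hd hh hdy
  have hda : a ≠ d := fun hh => hdx (hh ▸ hax)
  have hne : d ≠ x := fun hh => h.dx (hh ▸ hd)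
  have had := h.clq a ha d hd hda
  obtain ⟨d', hd', hd'c⟩ := h.swapP.colD hγ hγw (γ x) hgx
  have hd'x : ¬ G.Adj d' x := fun hh => hγ hh hd'c
  have hd'y : G.Adj d' y := (h.X1 d' hd').resolve_left hd'x
  by_cases hdd : d = d'
  · subst hdd
    exact h.link hc (cls_self hγ hγw) hne had hax hdc hd'c
  · obtain ⟨γ', g1, g2, g3, g4⟩ := h.swapD hγ hd hd' hdd (by
      intro r hr hdr
      rcases h.out hd hr hdr with rfl | rfl | rfl | rfl
      · exact absurd hdr hdx
      · exact (hγ hd'y).symm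
      · exact (h.swapP.neD hγ hγw hd').symm
      · rw [← hγw]; exact (h.swapP.neD hγ hγw hd').symm) (by
      intro r hr hdr
      rcases h.out hd' hr hdr with rfl | rfl | rfl | rfl
      · exact absurd hdr hd'x
      · exact (hγ hdy).symm
      · exact (h.swapP.neD hγ hγw hd).symm
      · rw [← hγw]; exact (h.swapP.neD hγ hγw hd).symm)
    refine h.link hc (cls_self (p := w1) (q := w2) g1 ?_) hne had hax hdc ?_
    · rw [g4 _ h.dw1, g4 _ h.dw2, hγw]
    · rw [g2, g4 _ h.dx, hd'c]

theorem Cl.M1 (h : Cl G k x y w1 w2 u v D) (hα : IsProperColoring G k α) (hαx : α x = α y)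
    {c : Fin k} (hfree : ∀ r, r ∉ D → G.Adj x r → α r ≠ c) {d a : V}
    (hd : d ∈ D) (hdy : G.Adj d y) (hdc : α d = c) (ha : a ∈ D) (hax : G.Adj a x)
    (hγ : IsProperColoring G k γ) (hγw : γ w1 = γ w2) (hgx : γ x ≠ γ w1) : False := by
  have hdx : ¬ G.Adj d x := fun hh => h.X2 d hd hh hdy
  obtain ⟨c', a1, a2, a3⟩ := flip1 hα (s := x) (a := c) (by
    intro r hr
    by_cases hrD : r ∈ D
    · intro hh
      have := h.injD hα hrD hd (hh.trans hdc.symm)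
      subst this
      exact hdx hr.symm
    · exact hfree r hrD hr)
  refine h.C1 ((cls_self hα hαx).step a1) hd hdy ?_ ha hax hγ hγw hgx
  rw [a2, a3 d (fun hh => h.dx (hh ▸ hd)), hdc]

theorem Cl.M2 (h : Cl G k x y w1 w2 u v D) (hα : IsProperColoring G k α) (hαx : α x = α y)
    {c : Fin k} (hfree : ∀ r, r ∉ D → G.Adj x r → α r ≠ c) {d a : V}
    (hd : d ∈ D) (hdx : G.Adj d x) (hdc : α d = c)
    (hdw : ∀ r, (r = w1 ∨ r = w2) → G.Adj d r → α r ≠ α x) (ha : a ∈ D) (hay : G.Adj a y)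
    (hγ : IsProperColoring G k γ) (hγw : γ w1 = γ w2) (hgy : γ y ≠ γ w1) : False := by
  have hdy : ¬ G.Adj d y := fun hh => h.X2 d hd hdx hh
  have hne : x ≠ d := fun hh => h.dx (hh ▸ hd)
  obtain ⟨c', a1, a2, a3, a4⟩ := flip2 hα hne (by
    intro r hr1 hr2 hr
    by_cases hrD : r ∈ D
    · intro hh
      exact hr2 (h.injD hα hrD hd hh)
    · rw [hdc]; exact hfree r hrD hr) (by
    intro r hr1 hr2 hr
    by_cases hrD : r ∈ D
    · exact h.neD hα hαx hrD
    · rcases h.out hd hrD hr with h1 | rfl | h1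
      · exact absurd h1 hr1
      · exact absurd hr hdy
      · exact hdw r h1 hr)
  refine h.swapX.C1 (c := c') (d := d) (a := a) ?_ hd hdx ?_ ha hay hγ hγw hgy
  · exact (cls_self hα hαx.symm).step a1
  · rw [a3, a4 y h.xy.symm (fun hh => h.dy (hh ▸ hd)), hαx]

theorem Cl.freecol (h : Cl G k x y w1 w2 u v D) (α : V → Fin k) (s : V)
    (hs : 2 ≤ (nb G s ∩ D).card) : ∃ c, c ≠ α s ∧ ∀ r, r ∉ D → G.Adj s r → α r ≠ c := by
  by_contra hcon
  push Not at hcon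
  have hsub : (Finset.univ : Finset (Fin k)) ⊆ insert (α s) ((nb G s \ D).image α) := by
    intro c _
    by_cases hc : c = α s
    · simp [hc]
    · obtain ⟨r, h1, h2, h3⟩ := hcon c hc
      apply Finset.mem_insert_of_mem
      exact Finset.mem_image.2 ⟨r, by simp [mem_nb, h1, h2], h3⟩
  have c1 := Finset.card_le_card hsub
  have c2 := Finset.card_insert_le (α s) ((nb G s \ D).image α)
  have c3 : ((nb G s \ D).image α).card ≤ _ := Finset.card_image_le
  have c4 := Finset.card_inter_add_card_sdiff (nb G s) D
  rw [h.good.reg] at c4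
  simp only [Finset.card_univ, Fintype.card_fin] at c1
  omega

theorem Cl.cardA (h : Cl G k x y w1 w2 u v D) :
    (nb G x ∩ D).card + (nb G y ∩ D).card + 1 = k := by
  rw [← h.cardD, ← Finset.card_union_of_disjoint]
  · congr 2
    ext s
    simp only [Finset.mem_union, Finset.mem_inter, mem_nb]
    constructor
    · rintro (h | h) <;> exact h.2
    · intro hs
      rcases h.X1 s hs with h1 | h1
      · exact Or.inl ⟨h1.symm, hs⟩
      · exact Or.inr ⟨h1.symm, hs⟩
  · rw [Finset.disjoint_left]
    intro s
    simp only [Finset.mem_inter, mem_nb]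
    intro h1 h2
    exact h.X2 s h1.2 h1.1.symm h2.1.symm

theorem exA {s : V} (hs : 2 ≤ (nb G s ∩ D).card) : ∃ a ∈ D, G.Adj a s := by
  obtain ⟨a, ha⟩ := Finset.card_pos.1 (lt_of_lt_of_le (by norm_num) hs)
  rw [Finset.mem_inter, mem_nb] at ha
  exact ⟨a, ha.2, ha.1.symm⟩

/-- generic colour of `x` in `γ` gives a neighbour of `y` in `D` -/
theorem Cl.exY (h : Cl G k x y w1 w2 u v D) (hγ : IsProperColoring G k γ) (hγw : γ w1 = γ w2)
    (hgx : γ x ≠ γ w1) : ∃ d ∈ D, G.Adj d y ∧ γ d = γ x := by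
  obtain ⟨d, hd, hdc⟩ := h.swapP.colD hγ hγw (γ x) hgx
  exact ⟨d, hd, (h.X1 d hd).resolve_left (fun hh => hγ hh hdc), hdc⟩

theorem Cl.GG1 (h : Cl G k x y w1 w2 u v D) (hα : IsProperColoring G k α) (hαx : α x = α y)
    (hγ : IsProperColoring G k γ) (hγw : γ w1 = γ w2) (h1 : α w1 ≠ α x) (h2 : α w2 ≠ α x)
    (g1 : γ x ≠ γ w1) (g2 : γ y ≠ γ w1) (hs : 2 ≤ (nb G x ∩ D).card) : False := by
  obtain ⟨c, hc, hfree⟩ := h.freecol α x hs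
  obtain ⟨d, hd, hdc⟩ := h.colD hα hαx c hc
  obtain ⟨a, ha, hax⟩ := exA hs
  obtain ⟨a', ha', hay', -⟩ := h.exY hγ hγw g1
  rcases h.X1 d hd with hdx | hdy
  · exact h.M2 hα hαx hfree hd hdx hdc (by rintro r (rfl | rfl) _ <;> assumption) ha' hay' hγ hγw g2
  · exact h.M1 hα hαx hfree hd hdy hdc ha hax hγ hγw g1

theorem Cl.GG (h : Cl G k x y w1 w2 u v D) (hα : IsProperColoring G k α) (hαx : α x = α y)
    (hγ : IsProperColoring G k γ) (hγw : γ w1 = γ w2) (h1 : α w1 ≠ α x) (h2 : α w2 ≠ α x)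
    (g1 : γ x ≠ γ w1) (g2 : γ y ≠ γ w1) : False := by
  by_cases hs : 2 ≤ (nb G x ∩ D).card
  · exact h.GG1 hα hαx hγ hγw h1 h2 g1 g2 hs
  · refine h.swapX.GG1 hα hαx.symm hγ hγw (hαx ▸ h1) (hαx ▸ h2) g2 g1 ?_
    have := h.cardA
    have := h.good.hk
    omega

/-- the trick: change the colour of `w2` -/
theorem Cl.trick (h : Cl G k x y w1 w2 u v D) (hα : IsProperColoring G k α) (hαx : α x = α y)
    (h1 : α w1 = α x) (h2 : α w2 ≠ α x) (hs : 2 ≤ (nb G w2 ∩ D).card) :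
    ∃ α', IsProperColoring G k α' ∧ α' w2 ≠ α x ∧ α' w2 ≠ α w2 ∧
      ∀ r, r ∉ D → r ≠ w2 → α' r = α r := by
  obtain ⟨c, hc, hfree⟩ := h.freecol α w2 hs
  by_cases hcx : c = α x
  · exfalso
    obtain ⟨α', a1, a2, a3⟩ := flip1 hα (s := w2) (a := c) (by
      intro r hr
      by_cases hrD : r ∈ D
      · rw [hcx]; exact h.neD hα hαx hrD
      · exact hfree r hrD hr)
    refine h.hno α' α' a1.2.1 a1.2.1 ?_ ?_ Relation.ReflTransGen.refl
    · rw [a3 x h.xw2, a3 y h.yw2, hαx]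
    · rw [a2, a3 w1 h.ww, hcx, h1]
  · obtain ⟨p, hp, hpc⟩ := h.colD hα hαx (α w2) h2
    obtain ⟨q, hq, hqc⟩ := h.colD hα hαx c hcx
    have hpq : p ≠ q := by
      rintro rfl
      exact hc (hqc.symm.trans hpc)
    have hpw : p ≠ w2 := fun hh => h.dw2 (hh ▸ hp)
    have hqw : q ≠ w2 := fun hh => h.dw2 (hh ▸ hq)
    let α' : V → Fin k := fun z => if z = w2 ∨ z = p then c else if z = q then α w2 else α z
    have e1 : α' w2 = c := by simp [α']
    have e2 : α' p = c := by simp [α']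
    have e3 : α' q = α w2 := by simp [α', hpq.symm, hqw]
    have e4 : ∀ z, z ≠ w2 → z ≠ p → z ≠ q → α' z = α z := by
      intro z z1 z2 z3
      simp [α', z1, z2, z3]
    have hout : ∀ r, r ∉ D → r ≠ w2 → α' r = α r := by
      intro r hr hrw
      exact e4 r hrw (fun hh => hr (hh ▸ hp)) (fun hh => hr (hh ▸ hq))
    have hS : ∀ d ∈ D, ∀ r, r ∉ D → r ≠ w2 → G.Adj d r → α r = α x := by
      intro d hd r hr hrw hdr
      rcases h.out hd hr hdr with rfl | rfl | rfl | rfl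
      · rfl
      · exact hαx.symm
      · exact h1
      · exact absurd rfl hrw
    have hpw2 : ¬ G.Adj p w2 := fun hh => hα hh hpc
    have key : ∀ s t, (s = w2 ∨ s = p ∨ s = q) → G.Adj s t → α' s ≠ α' t := by
      intro s t hs hst
      by_cases t1 : t = w2
      · subst t1
        rw [e1]
        rcases hs with rfl | rfl | rfl
        · exact absurd rfl hst.ne
        · exact absurd hst hpw2
        · rw [e3]; exact hc.symm
      · by_cases t2 : t = p
        · subst t2
          rw [e2]
          rcases hs with rfl | rfl | rfl
          · exact absurd hst.symm hpw2
          · exact absurd rfl hst.ne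
          · rw [e3]; exact hc.symm
        · by_cases t3 : t = q
          · subst t3
            rw [e3]
            rcases hs with rfl | rfl | rfl
            · rw [e1]; exact hc
            · rw [e2]; exact hc
            · exact absurd rfl hst.ne
          · rw [e4 t t1 t2 t3]
            by_cases htD : t ∈ D
            · have n1 : α t ≠ α w2 := fun hh => t2 (h.injD hα htD hp (hh.trans hpc.symm))
              have n2 : α t ≠ c := fun hh => t3 (h.injD hα htD hq (hh.trans hqc.symm))
              rcases hs with rfl | rfl | rfl
              · rw [e1]; exact n2.symm
              · rw [e2]; exact n2.symm
              · rw [e3]; exact n1.symm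
            · rcases hs with rfl | rfl | rfl
              · rw [e1]; exact (hfree t htD hst).symm
              · rw [e2, hS s hp t htD t1 hst]; exact hcx
              · rw [e3, hS s hq t htD t1 hst]; exact h2
    refine ⟨α', ?_, e1 ▸ hcx, e1 ▸ hc, hout⟩
    intro s t hst
    by_cases hs' : s = w2 ∨ s = p ∨ s = q
    · exact key s t hs' hst
    · by_cases ht' : t = w2 ∨ t = p ∨ t = q
      · exact (key t s ht' hst.symm).symm
      · push Not at hs' ht'
        rw [e4 s hs'.1 hs'.2.1 hs'.2.2, e4 t ht'.1 ht'.2.1 ht'.2.2]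
        exact hα hst

/-- NG, free colour different from that of `w2` -/
theorem Cl.NGa (h : Cl G k x y w1 w2 u v D) (hα : IsProperColoring G k α) (hαx : α x = α y)
    (hγ : IsProperColoring G k γ) (hγw : γ w1 = γ w2) (h1 : α w1 = α x) (h2 : α w2 ≠ α x)
    (g1 : γ x ≠ γ w1) (g2 : γ y ≠ γ w1) {c : Fin k} (hc : c ≠ α x) (hcb : c ≠ α w2)
    (hfree : ∀ r, r ∉ D → G.Adj x r → α r ≠ c) : False := by
  obtain ⟨d, hd, hdc⟩ := h.colD hα hαx c hc
  obtain ⟨a, ha, hax, -⟩ := h.swapX.exY hγ hγw g2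
  obtain ⟨t, ht, hty, -⟩ := h.exY hγ hγw g1
  rcases h.X1 d hd with hdx | hdy
  · rcases h.W1 d hd with hdw | hdw
    · have hdw2 : ¬ G.Adj d w2 := h.W2 d hd hdw
      have hdy : ¬ G.Adj d y := h.X2 d hd hdx
      have htx : ¬ G.Adj t x := fun hh => h.X2 t ht hh hty
      have hdt : d ≠ t := fun hh => htx (hh ▸ hdx)
      obtain ⟨α', a1, a2, a3, a4⟩ := h.swapD hα hd ht hdt (by
        intro r hr hdr
        have htn := (h.neD hα hαx ht).symm
        rcases h.out hd hr hdr with rfl | rfl | rfl | rfl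
        · exact htn
        · rw [← hαx]; exact htn
        · rw [h1]; exact htn
        · exact absurd hdr hdw2) (by
        intro r hr hdr
        rw [hdc]
        rcases h.out ht hr hdr with rfl | rfl | rfl | rfl
        · exact hc.symm
        · rw [← hαx]; exact hc.symm
        · rw [h1]; exact hc.symm
        · exact hcb.symm)
      refine h.M1 (α := α') a1 (by rw [a4 x h.dx, a4 y h.dy, hαx]) (c := c) ?_ ht hty (a3.trans hdc)
        ha hax hγ hγw g1
      intro r hr hxr
      rw [a4 r hr]; exact hfree r hr hxr
    · refine h.M2 hα hαx hfree hd hdx hdc ?_ ht hty hγ hγw g2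
      rintro r (rfl | rfl) hr
      · exact absurd hdw (h.W2 d hd hr)
      · exact h2
  · exact h.M1 hα hαx hfree hd hdy hdc ha hax hγ hγw g1

theorem Cl.NG1 (h : Cl G k x y w1 w2 u v D) (hα : IsProperColoring G k α) (hαx : α x = α y)
    (hγ : IsProperColoring G k γ) (hγw : γ w1 = γ w2) (h1 : α w1 = α x) (h2 : α w2 ≠ α x)
    (g1 : γ x ≠ γ w1) (g2 : γ y ≠ γ w1) (hs : 2 ≤ (nb G x ∩ D).card) : False := by
  obtain ⟨c, hc, hfree⟩ := h.freecol α x hs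
  by_cases hcb : c = α w2
  swap
  · exact h.NGa hα hαx hγ hγw h1 h2 g1 g2 hc hcb hfree
  have hxw2 : ¬ G.Adj x w2 := fun hh => hfree w2 h.dw2 hh hcb.symm
  by_cases hT2 : 2 ≤ (nb G w2 ∩ D).card
  · obtain ⟨α', a1, a2, a3, a4⟩ := h.trick hα hαx h1 h2 hT2
    have ex := a4 x h.dx h.xw2
    have ey := a4 y h.dy h.yw2
    have ew := a4 w1 h.dw1 h.ww
    refine h.NGa (α := α') a1 (by rw [ex, ey, hαx]) hγ hγw (by rw [ew, ex, h1]) (by rw [ex]; exact a2)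
      g1 g2 (c := c) (by rw [ex]; exact hc) (by rw [hcb]; exact a3.symm) ?_
    intro r hr hxr
    rw [a4 r hr (fun hh => hxw2 (hh ▸ hxr))]
    exact hfree r hr hxr
  have hT1 : 2 ≤ (nb G w1 ∩ D).card := by
    have := h.swapP.cardA
    have := h.good.hk
    omega
  obtain ⟨a, ha, hax, -⟩ := h.swapX.exY hγ hγw g2
  obtain ⟨d, hd, hdw1, hdc⟩ := h.swapP.swapX.exY hα hαx h2
  -- swapping two vertices adjacent to `w1`
  have sw : ∀ s ∈ D, ∀ t ∈ D, s ≠ t → G.Adj s w1 → ∀ r, r ∉ D → G.Adj s r → α r ≠ α t := by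
    intro s hs t ht hst hsw r hr hsr
    have htn := (h.neD hα hαx ht).symm
    rcases h.out hs hr hsr with rfl | rfl | rfl | rfl
    · exact htn
    · rw [← hαx]; exact htn
    · rw [h1]; exact htn
    · exact absurd hsr (h.W2 s hs hsw)
  by_cases hex : ∃ t ∈ D, G.Adj t w1 ∧ G.Adj t y
  · obtain ⟨t, ht, htw, hty⟩ := hex
    by_cases hdt : d = t
    · subst hdt
      exact h.M1 hα hαx hfree hd hty (hdc.trans hcb.symm) ha hax hγ hγw g1
    · obtain ⟨α', a1, a2, a3, a4⟩ := h.swapD hα hd ht hdt (sw d hd t ht hdt hdw1)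
        (sw t ht d hd (Ne.symm hdt) htw)
      refine h.M1 (α := α') a1 (by rw [a4 x h.dx, a4 y h.dy, hαx]) (c := c) ?_ ht hty
        (a3.trans (hdc.trans hcb.symm)) ha hax hγ hγw g1
      intro r hr hxr
      rw [a4 r hr]; exact hfree r hr hxr
  · push Not at hex
    have hT1x : ∀ t ∈ D, G.Adj t w1 → G.Adj t x := fun t ht htw =>
      (h.X1 t ht).resolve_right (hex t ht htw)
    have hA2w : ∀ t ∈ D, G.Adj t y → G.Adj t w2 := fun t ht hty =>
      (h.W1 t ht).resolve_left (fun hh => hex t ht hh hty)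
    obtain ⟨q, hq, hqy, hqc⟩ := h.exY hγ hγw g1
    have hqw2 := hA2w q hq hqy
    have hqw1 : ¬ G.Adj q w1 := fun hh => h.W2 q hq hh hqw2
    by_cases hgf : ∀ r, r ∉ D → G.Adj w1 r → γ r ≠ γ x
    · obtain ⟨γ', b1, b2, b3⟩ := flip1 hγ (s := w1) (a := γ x) (by
        intro r hr
        by_cases hrD : r ∈ D
        · intro hh
          have := h.injD hγ hrD hq (hh.trans hqc.symm)
          subst this
          exact hqw1 hr.symm
        · exact hgf r hrD hr)
      exact h.link (cls_self hα hαx) ((cls_self hγ hγw).step b1) h.xw1 (hT1x d hd hdw1) hdw1 h1.symm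
        (by rw [b2, b3 x h.xw1])
    · obtain ⟨c', hc', hfree'⟩ := h.freecol γ w1 hT1
      have hcg : c' ≠ γ x := by
        rintro rfl
        exact hgf hfree'
      have fin : ∀ γ' : V → Fin k, IsProperColoring G k γ' → (∀ r, r ∉ D → γ' r = γ r) →
          ∀ t ∈ D, G.Adj t w1 → γ' t = c' → False := by
        intro γ' b1 b2 t ht htw htc
        refine h.swapP.M2 (α := γ') (γ := α) b1 (by rw [b2 w1 h.dw1, b2 w2 h.dw2, hγw]) (c := c') ?_
          ht htw htc ?_ hq hqw2 hα hαx h2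
        · intro r hr hwr
          rw [b2 r hr]; exact hfree' r hr hwr
        · rintro r (rfl | rfl) hr
          · rw [b2 r h.dx, b2 w1 h.dw1]; exact g1
          · exact absurd hr (hex t ht htw)
      obtain ⟨d', hd', hd'c⟩ := h.swapP.colD hγ hγw c' hc'
      by_cases hd'w : G.Adj d' w1
      · exact fin γ hγ (fun _ _ => rfl) d' hd' hd'w hd'c
      · have hd'w2 := (h.W1 d' hd').resolve_left hd'w
        obtain ⟨t, ht, htw, hty⟩ : ∃ t ∈ D, G.Adj t w1 ∧ γ t ≠ γ y := by
          by_contra hcon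
          push Not at hcon
          have : (nb G w1 ∩ D).card ≤ 1 := by
            rw [Finset.card_le_one]
            intro a ha b hb
            rw [Finset.mem_inter, mem_nb] at ha hb
            exact h.injD hγ ha.2 hb.2
              ((hcon a ha.2 ha.1.symm).trans (hcon b hb.2 hb.1.symm).symm)
          omega
        have htx := hT1x t ht htw
        have hdt : d' ≠ t := fun hh => hd'w (hh ▸ htw)
        obtain ⟨γ', b1, b2, b3, b4⟩ := h.swapD hγ hd' ht hdt (by
          intro r hr hdr
          rcases h.out hd' hr hdr with rfl | rfl | rfl | rfl
          · exact (hγ htx).symm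
          · exact hty.symm
          · exact absurd hdr hd'w
          · rw [← hγw]; exact (hγ htw).symm) (by
          intro r hr hdr
          rw [hd'c]
          rcases h.out ht hr hdr with rfl | rfl | rfl | rfl
          · exact hcg.symm
          · exact absurd hdr (hex t ht htw)
          · exact hc'.symm
          · rw [← hγw]; exact hc'.symm)
        exact fin γ' b1 b4 t ht htw (b3.trans hd'c)

theorem Cl.NG (h : Cl G k x y w1 w2 u v D) (hα : IsProperColoring G k α) (hαx : α x = α y)
    (hγ : IsProperColoring G k γ) (hγw : γ w1 = γ w2) (h1 : α w1 = α x) (h2 : α w2 ≠ α x)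
    (g1 : γ x ≠ γ w1) (g2 : γ y ≠ γ w1) : False := by
  by_cases hs : 2 ≤ (nb G x ∩ D).card
  · exact h.NG1 hα hαx hγ hγw h1 h2 g1 g2 hs
  · refine h.swapX.NG1 hα hαx.symm hγ hγw (hαx ▸ h1) (hαx ▸ h2) g2 g1 ?_
    have := h.cardA
    have := h.good.hk
    omega

/-- NN, free colour (of `x` or `y`) different from the colour of `w2` -/
theorem Cl.NNa (h : Cl G k x y w1 w2 u v D) (hα : IsProperColoring G k α) (hαx : α x = α y)
    (hγ : IsProperColoring G k γ) (hγw : γ w1 = γ w2) (h1 : α w1 = α x) (h2 : α w2 ≠ α x)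
    (g2 : γ y ≠ γ w1) (hA1 : ∀ z ∈ D, G.Adj z x → G.Adj z w2) {a' : V} (ha' : a' ∈ D)
    (hay' : G.Adj a' y) {c : Fin k} (hc : c ≠ α x) (hcb : c ≠ α w2)
    (hfree : (∀ r, r ∉ D → G.Adj x r → α r ≠ c) ∨ (∀ r, r ∉ D → G.Adj y r → α r ≠ c)) : False := by
  obtain ⟨a, ha, hax, -⟩ := h.swapX.exY hγ hγw g2
  have fin : ∀ α' : V → Fin k, IsProperColoring G k α' → (∀ r, r ∉ D → α' r = α r) →
      ∀ t ∈ D, G.Adj t x → α' t = c → False := by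
    intro α' a1 a2 t ht htx htc
    have ex : α' x = α' y := by rw [a2 x h.dx, a2 y h.dy, hαx]
    rcases hfree with hf | hf
    · refine h.M2 (α := α') a1 ex (c := c) ?_ ht htx htc ?_ ha' hay' hγ hγw g2
      · intro r hr hxr
        rw [a2 r hr]; exact hf r hr hxr
      · rintro r (rfl | rfl) hr
        · exact absurd (hA1 t ht htx) (h.W2 t ht hr)
        · rw [a2 r h.dw2, a2 x h.dx]; exact h2
    · refine h.swapX.M1 (α := α') a1 ex.symm (c := c) ?_ ht htx htc ha' hay' hγ hγw g2
      intro r hr hxr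
      rw [a2 r hr]; exact hf r hr hxr
  obtain ⟨d, hd, hdc⟩ := h.colD hα hαx c hc
  by_cases hdx : G.Adj d x
  · exact fin α hα (fun _ _ => rfl) d hd hdx hdc
  · have hda : d ≠ a := fun hh => hdx (hh ▸ hax)
    have hn := (h.neD hα hαx ha).symm
    obtain ⟨α', b1, b2, b3, b4⟩ := h.swapD hα hd ha hda (by
      intro r hr hdr
      rcases h.out hd hr hdr with rfl | rfl | rfl | rfl
      · exact hn
      · rw [← hαx]; exact hn
      · rw [h1]; exact hn
      · exact (hα (hA1 a ha hax)).symm) (by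
      intro r hr hdr
      rw [hdc]
      rcases h.out ha hr hdr with rfl | rfl | rfl | rfl
      · exact hc.symm
      · rw [← hαx]; exact hc.symm
      · rw [h1]; exact hc.symm
      · exact hcb.symm)
    exact fin α' b1 b4 a ha hax (b3.trans hdc)

theorem Cl.NN1 (h : Cl G k x y w1 w2 u v D) (hα : IsProperColoring G k α) (hαx : α x = α y)
    (hγ : IsProperColoring G k γ) (hγw : γ w1 = γ w2) (h1 : α w1 = α x) (h2 : α w2 ≠ α x)
    (g2 : γ y ≠ γ w1) (hA1 : ∀ z ∈ D, G.Adj z x → G.Adj z w2) {a' : V} (ha' : a' ∈ D)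
    (hay' : G.Adj a' y) (hT2 : 2 ≤ (nb G w2 ∩ D).card) : False := by
  obtain ⟨c, s, hs, hc, hfree⟩ : ∃ c s, (s = x ∨ s = y) ∧ c ≠ α x ∧
      ∀ r, r ∉ D → G.Adj s r → α r ≠ c := by
    by_cases hs : 2 ≤ (nb G x ∩ D).card
    · obtain ⟨c, hc, hf⟩ := h.freecol α x hs
      exact ⟨c, x, Or.inl rfl, hc, hf⟩
    · obtain ⟨c, hc, hf⟩ := h.freecol α y (by
        have := h.cardA
        have := h.good.hk
        omega)
      exact ⟨c, y, Or.inr rfl, hαx ▸ hc, hf⟩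
  by_cases hcb : c = α w2
  · have hsw2 : ¬ G.Adj s w2 := fun hh => hfree w2 h.dw2 hh hcb.symm
    obtain ⟨α', a1, a2, a3, a4⟩ := h.trick hα hαx h1 h2 hT2
    have ex := a4 x h.dx h.xw2
    have ey := a4 y h.dy h.yw2
    have ew := a4 w1 h.dw1 h.ww
    have hf : ∀ r, r ∉ D → G.Adj s r → α' r ≠ c := by
      intro r hr hxr
      rw [a4 r hr (fun hh => hsw2 (hh ▸ hxr))]
      exact hfree r hr hxr
    refine h.NNa (α := α') a1 (by rw [ex, ey, hαx]) hγ hγw (by rw [ew, ex, h1]) (by rw [ex]; exact a2)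
      g2 hA1 ha' hay' (c := c) (by rw [ex]; exact hc) (by rw [hcb]; exact a3.symm) ?_
    rcases hs with rfl | rfl
    · exact Or.inl hf
    · exact Or.inr hf
  · refine h.NNa hα hαx hγ hγw h1 h2 g2 hA1 ha' hay' hc hcb ?_
    rcases hs with rfl | rfl
    · exact Or.inl hfree
    · exact Or.inr hfree

theorem Cl.NN (h : Cl G k x y w1 w2 u v D) (hα : IsProperColoring G k α) (hαx : α x = α y)
    (hγ : IsProperColoring G k γ) (hγw : γ w1 = γ w2) (h1 : α w1 = α x) (h2 : α w2 ≠ α x)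
    (g1 : γ x = γ w1) (g2 : γ y ≠ γ w1) : False := by
  have hdis : ∀ z ∈ D, G.Adj z x → ¬ G.Adj z w1 := by
    intro z _ hzx hzw
    exact h.link (cls_self hα hαx) (cls_self hγ hγw) h.xw1 hzx hzw h1.symm g1
  have hA1 : ∀ z ∈ D, G.Adj z x → G.Adj z w2 := fun z hz hzx =>
    (h.W1 z hz).resolve_left (hdis z hz hzx)
  have hT1 : ∀ z ∈ D, G.Adj z w1 → G.Adj z y := fun z hz hzw =>
    (h.X1 z hz).resolve_left (fun hh => hdis z hz hh hzw)
  obtain ⟨a, ha, hax, -⟩ := h.swapX.exY hγ hγw g2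
  obtain ⟨d, hd, hdw1, -⟩ := h.swapP.swapX.exY hα hαx h2
  by_cases hT2 : 2 ≤ (nb G w2 ∩ D).card
  · exact h.NN1 hα hαx hγ hγw h1 h2 g2 hA1 hd (hT1 d hd hdw1) hT2
  · refine h.swapP.NN1 hγ hγw hα hαx g1 g2 h2 hT1 ha (hA1 a ha hax) ?_
    have c1 := h.cardA
    have c2 : (nb G x ∩ D).card ≤ (nb G w2 ∩ D).card := by
      apply Finset.card_le_card
      intro s
      rw [Finset.mem_inter, Finset.mem_inter, mem_nb, mem_nb]
      exact fun hh => ⟨(hA1 s hh.2 hh.1.symm).symm, hh.2⟩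
    have := h.good.hk
    omega

theorem Cl.final (h : Cl G k x y w1 w2 u v D) (hα : IsProperColoring G k α) (hαx : α x = α y)
    (hγ : IsProperColoring G k γ) (hγw : γ w1 = γ w2) : False := by
  have n1 : ¬ (α w1 = α x ∧ α w2 = α x) := fun hh =>
    h.hno α α hα hα hαx (hh.1.trans hh.2.symm) Relation.ReflTransGen.refl
  have n2 : ¬ (γ x = γ w1 ∧ γ y = γ w1) := fun hh =>
    h.hno γ γ hγ hγ (hh.1.trans hh.2.symm) hγw Relation.ReflTransGen.refl
  by_cases a1 : α w1 = α x
  · have a2 : α w2 ≠ α x := fun hh => n1 ⟨a1, hh⟩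
    by_cases b1 : γ x = γ w1
    · exact h.NN hα hαx hγ hγw a1 a2 b1 (fun hh => n2 ⟨b1, hh⟩)
    · by_cases b2 : γ y = γ w1
      · exact h.swapX.NN hα hαx.symm hγ hγw (hαx ▸ a1) (hαx ▸ a2) b2 b1
      · exact h.NG hα hαx hγ hγw a1 a2 b1 b2
  · by_cases a2 : α w2 = α x
    · by_cases b1 : γ x = γ w1
      · exact h.swapW.NN hα hαx hγ hγw.symm a2 a1 (hγw ▸ b1) (hγw ▸ fun hh => n2 ⟨b1, hh⟩)
      · by_cases b2 : γ y = γ w1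
        · exact h.swapX.swapW.NN hα hαx.symm hγ hγw.symm (hαx ▸ a2) (hαx ▸ a1) (hγw ▸ b2) (hγw ▸ b1)
        · exact h.swapW.NG hα hαx hγ hγw.symm a2 a1 (hγw ▸ b1) (hγw ▸ b2)
    · by_cases b1 : γ x = γ w1
      · exact h.swapP.NG hγ hγw hα hαx b1 (fun hh => n2 ⟨b1, hh⟩) a1 a2
      · by_cases b2 : γ y = γ w1
        · exact h.swapX.swapP.NG hγ hγw hα hαx.symm b2 b1 (hαx ▸ a1) (hαx ▸ a2)
        · exact h.GG hα hαx hγ hγw a1 a2 b1 b2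

theorem MQ.false {e f : Fin k} (h : MQ G k x y w1 w2 u v α γ e f D) : False := by
  have Q := h.Q
  obtain ⟨d, hd⟩ := Q.nonempty
  have hcl : Cl G k x y w1 w2 u v D := by
    refine ⟨Q.good, Q.xy, Q.ww, Q.xw1, Q.xw2, Q.yw1, Q.yw2, Q.ux, Q.uy, Q.vw1, Q.vw2, Q.dx, Q.dy,
      Q.dw1, Q.dw2, Q.closed, ?_, ?_, fun z hz => (h.double hz).1, fun z hz => h.slackX hz,
      fun z hz => (h.double hz).2, fun z hz => h.swapP.slackX hz, ?_⟩
    · have h1 := h.deg hd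
      rw [if_pos (h.double hd).1, if_pos (h.double hd).2] at h1
      have h2 := card_cn (G := G) (D := D) (z := d)
      rw [h.cn_eq hd] at h2
      omega
    · intro s hs t ht hst
      rw [← h.cn_eq hs, mem_cn] at ht
      rcases ht with ht | ht
      · exact absurd ht.symm hst
      · exact ht.1
    · intro α' γ' h1 h2 h3 h4 h5
      exact Q.nke (((L1 Q.good Q.xy Q.ux Q.uy Q.hα h1 Q.hαx h3).trans h5).trans
        (L1 Q.good Q.ww Q.vw1 Q.vw2 h2 Q.hγ h4 Q.hγw))
  exact hcl.final Q.hα Q.hαx Q.hγ Q.hγw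

theorem no_quad : ∀ (n : ℕ) (x y w1 w2 u v : V) (α γ : V → Fin k) (e f : Fin k) (D : Finset V),
    D.card = n → ¬ Quad G k x y w1 w2 u v α γ e f D := by
  intro n
  induction n using Nat.strong_induction_on with
  | _ n ih =>
  intro x y w1 w2 u v α γ e f D hD Q
  refine MQ.false ⟨Q, ?_⟩
  intro x' y' w1' w2' u' v' α' γ' e' f' D' Q'
  by_contra hlt
  exact ih _ (by omega) _ _ _ _ _ _ _ _ _ _ _ rfl Q'

theorem main (hG : Good G k) (hune : u ≠ v) (huv : ¬ G.Adj u v) (hw1 : G.Adj v w1)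
    (hw2 : G.Adj v w2) (hwne : w1 ≠ w2) (hwnadj : ¬ G.Adj w1 w2) (hw1u : ¬ G.Adj u w1)
    (hw2u : ¬ G.Adj u w2) : KempeClass G k := by
  have hk := hG.hk
  obtain ⟨γ, hγ, hγw⟩ := exists_alike hG hwne hwnadj hw1 hw2
  have key : ∀ α, IsProperColoring G k α → KE G k α γ := by
    intro α hα
    by_contra hn
    obtain ⟨x, y, hux, huy, hxy, hαx⟩ : ∃ x y, G.Adj u x ∧ G.Adj u y ∧ x ≠ y ∧ α x = α y := by
      by_contra hcon
      push Not at hcon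
      have h1 : ((nb G u).image α).card = (nb G u).card := by
        apply Finset.card_image_of_injOn
        intro a ha b hb hab
        rw [Finset.mem_coe, mem_nb] at ha hb
        by_contra hne
        exact hcon a b ha hb hne hab
      have h2 : (nb G u).image α ⊆ Finset.univ.erase (α u) := by
        intro c hc
        rw [Finset.mem_image] at hc
        obtain ⟨s, hs, rfl⟩ := hc
        rw [mem_nb] at hs
        simp [(hα hs).symm]
      have h3 := Finset.card_le_card h2
      rw [h1, hG.reg, Finset.card_erase_of_mem (Finset.mem_univ _)] at h3
      simp at h3
      omega
    let e : Fin k := ⟨0, by omega⟩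
    let f : Fin k := ⟨1, by omega⟩
    have hef : e ≠ f := by simp [e, f]
    refine no_quad (G := G) _ x y w1 w2 u v α γ e f (Finset.univ \ {x, y, w1, w2}) rfl
      ⟨hG, hxy, hwne, ?_, ?_, ?_, ?_, hune, hux, huy, ?_, ?_, hw1, hw2, ?_, ?_, hα, hαx, hγ, hγw, hn,
        hef, by simp, by simp, by simp, by simp, ?_,
        nonext_univ hG hwne hxy hα hαx hγ hγw hn hux huy hw1 hw2 hef⟩
    · rintro rfl; exact hw1u hux
    · rintro rfl; exact hw2u hux
    · rintro rfl; exact hw1u huy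
    · rintro rfl; exact hw2u huy
    · rintro rfl; exact huv hw1.symm
    · rintro rfl; exact huv hw2.symm
    · rintro rfl; exact huv hux
    · rintro rfl; exact huv huy
    · intro z _ s _
      simp only [Finset.mem_sdiff, Finset.mem_univ, true_and, Finset.mem_insert,
        Finset.mem_singleton]
      tauto
  intro c c' hc hc'
  exact ((key c hc).trans (key c' hc').symm).kempe

end

end Kmp

/-- for `k ≥ 4` and a 3-connected `k`-regular graph `G`, if `u` and `v`
are non-adjacent and `v` has two non-adjacent neighbours `w1, w2` neither adjacent to
`u`, then the proper `k`-colourings of `G` form a single Kempe class. -/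
theorem stmt11 {V : Type*} [Fintype V] (k : ℕ) (hk : 4 ≤ k) (G : SimpleGraph V)
    [DecidableRel G.Adj] (hreg : G.IsRegularOfDegree k) (h3c : ThreeConnected G)
    (u v : V) (hune : u ≠ v) (huv : ¬ G.Adj u v)
    (w1 w2 : V) (hw1 : G.Adj v w1) (hw2 : G.Adj v w2)
    (hwne : w1 ≠ w2) (hwnadj : ¬ G.Adj w1 w2)
    (hw1u : ¬ G.Adj u w1) (hw2u : ¬ G.Adj u w2) :
    KempeClass G k :=
  Kmp.main (Kmp.good_of hk hreg h3c) hune huv hw1 hw2 hwne hwnadj hw1u hw2u
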